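/- arXiv:1504.03100 — 3 statements merged into one kernel-verified Lean document; each statement's English description precedes it below -/
import Mathlib

section
/- Let α ∈ (0,1), λ > 0, c ≥ 0 and H ∈ (0,1). Let Z : [0,1] → ℝ be continuous with Z(0) = 0 such that for every γ < H/2, Z has Hölder regularity γ on [0,1]. Let X : [0,1] → ℝ satisfy X_t = ∫_0^t s f^{α,λ}(t−s) ds + c ∫_0^t f^{α,λ}(t−s) Z_s ds for all t ∈ [0,1]. Then for every ε > 0, X has Hölder regularity ((α + H/2) ∧ 1) − ε on [0,1]. -/
/-!
The kernel `f = falpha α lam` behaves like `u ^ (α - 1)` near `0`, and convolving with it gains `α`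
derivatives. Expanding `f` as a series in the powers `u ^ (α (n + 1) - 1)`, whose coefficients decay
superexponentially because `Γ` grows that fast (`gamma_lower`), gives `|f u| ≤ A u ^ (α - 1)`
(`falpha_bound`) and, term by term, `|f (u + h) - f u| ≤ A u ^ (α - 2) h` (`falpha_lip`).
Interpolating, `|f (u + h) - f u| ≤ A u ^ (α - 1 - p) h ^ p` for `0 < p ≤ 1` (`falpha_increment`).

If `W 0 = 0` and `W` is Hölder of order `γ`, the increment of `t ↦ ∫₀ᵗ f (t - s) W s ds` from `t` to
`T = t + h` equals
`∫ₜᵀ f (T - s) (W s - W t) ds + ∫₀ᵗ (f (T - s) - f (t - s)) (W s - W t) ds + W t ∫ₜᵀ f u du`,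
and each of the three terms is `O(h ^ p)` for every `0 < p ≤ 1` with `p < α + γ` (`conv_increment`).
The loss of an arbitrarily small amount in the exponent makes it unnecessary to treat the regions
`t - s ≤ h` and `t - s ≥ h` of the middle integral separately. The theorem applies this with
`W s = s` and with `W = Z`.
-/

open MeasureTheory Filter Set

/-- Mittag-Leffler function `E_{a,b}(z) = ∑ z^n / Γ(a n + b)`. -/
noncomputable def mlf (a b z : ℝ) : ℝ := ∑' n : ℕ, z ^ n / Real.Gamma (a * n + b)

/-- `f^{α,λ}(x) = λ x^{α-1} E_{α,α}(-λ x^α)`. -/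
noncomputable def falpha (a lam x : ℝ) : ℝ := lam * x ^ (a - 1) * mlf a a (-lam * x ^ a)

/-- Hölder regularity `γ` on a set `S`. -/
def HolderOn (f : ℝ → ℝ) (γ : ℝ) (S : Set ℝ) : Prop :=
  ∃ C > 0, ∀ x ∈ S, ∀ y ∈ S, |f x - f y| ≤ C * |x - y| ^ γ

/-- Riemann–Liouville fractional integral of order `v` on `[0,1]`. -/
noncomputable def fracInt (v : ℝ) (f : ℝ → ℝ) (x : ℝ) : ℝ :=
  (1 / Real.Gamma v) * ∫ t in (0:ℝ)..x, f t * (x - t) ^ (v - 1)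

/-- The kernel integral `x ↦ ∫_0^x f(t) (x-t)^{-v} dt` appearing in the
Riemann–Liouville fractional derivative. -/
noncomputable def rlKer (v : ℝ) (f : ℝ → ℝ) (y : ℝ) : ℝ :=
  ∫ t in (0:ℝ)..y, f t * (y - t) ^ (-v)

/-- Riemann–Liouville fractional derivative of order `v` on `[0,1]`
(defined when `rlKer v f` is differentiable). -/
noncomputable def fracDeriv (v : ℝ) (f : ℝ → ℝ) (x : ℝ) : ℝ :=
  (1 / Real.Gamma (1 - v)) * derivWithin (rlKer v f) (Set.Icc 0 1) x

/-! ### The Mittag-Leffler kernel -/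

/-- `M ^ (x - 1) e^{-M}` is the Gamma integral over `(M, ∞)` with `u ^ (x - 1)` replaced by its
minimum there. As `M` is arbitrary, `Γ` grows faster than every exponential. -/
theorem gamma_lower {M x : ℝ} (hM : 0 < M) (hx : 1 ≤ x) :
    M ^ (x - 1) * Real.exp (-M) ≤ Real.Gamma x := by
  rw [Real.Gamma_eq_integral (by linarith), ← integral_exp_neg_Ioi M, ← integral_const_mul]
  have hint := Real.GammaIntegral_convergent (s := x) (by linarith)
  calc ∫ u in Ioi M, M ^ (x - 1) * Real.exp (-u)
      ≤ ∫ u in Ioi M, Real.exp (-u) * u ^ (x - 1) := by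
        refine setIntegral_mono_on ((integrableOn_exp_neg_Ioi M).const_mul _)
          (hint.mono_set (Ioi_subset_Ioi hM.le)) measurableSet_Ioi fun u hu => ?_
        rw [mul_comm]
        gcongr
        exact le_of_lt hu
    _ ≤ ∫ u in Ioi (0:ℝ), Real.exp (-u) * u ^ (x - 1) := by
        refine setIntegral_mono_set hint ?_ (Ioi_subset_Ioi hM.le).eventuallyLE
        filter_upwards [ae_restrict_mem measurableSet_Ioi] with u hu
        have : (0:ℝ) < u := hu
        simp only [Pi.zero_apply]
        positivity

/-- The coefficients of the Mittag-Leffler series stay summable with an extra factor `n + 1`, which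
is the factor produced by differentiating the series of `falpha` term by term. -/
theorem summable_coeff {α lam : ℝ} (hα : 0 < α) (hlam : 0 < lam) :
    Summable fun n : ℕ => ((n : ℝ) + 1) * (lam ^ n / Real.Gamma (α * n + α)) := by
  -- With `M ^ α = 2 lam`, the lower bound for `Γ` turns the series into a geometric one of ratio `1/2`.
  set M : ℝ := (2 * lam) ^ (1 / α) with hMdef
  have hM : 0 < M := by positivity
  have hMα : M ^ α = 2 * lam := by
    rw [hMdef, ← Real.rpow_mul (by positivity), one_div_mul_cancel hα.ne', Real.rpow_one]
  have hgeo : Summable fun n : ℕ => ((n : ℝ) + 1) * (1 / 2 : ℝ) ^ n := by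
    have h1 := summable_pow_mul_geometric_of_norm_lt_one (R := ℝ) 1 (r := 1 / 2) (by norm_num)
    have h2 := summable_geometric_of_lt_one (r := (1 / 2 : ℝ)) (by norm_num) (by norm_num)
    refine (h1.add h2).congr fun n => ?_
    ring
  refine (hgeo.mul_left (Real.exp M / M ^ (α - 1))).of_norm_bounded_eventually_nat ?_
  obtain ⟨N, hN⟩ := exists_nat_gt (1 / α)
  filter_upwards [eventually_ge_atTop N] with n hn
  have hx : 1 ≤ α * n + α := by
    have h1 : 1 / α < n := hN.trans_le (by exact_mod_cast hn)
    rw [div_lt_iff₀ hα] at h1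
    nlinarith
  have hG := gamma_lower hM hx
  have hG0 : 0 < Real.Gamma (α * n + α) := Real.Gamma_pos_of_pos (by linarith)
  have hpow : M ^ (α * n + α - 1) = (2 * lam) ^ n * M ^ (α - 1) := by
    rw [add_sub_assoc, Real.rpow_add hM, Real.rpow_mul hM.le, hMα, Real.rpow_natCast]
  have hMa : 0 < M ^ (α - 1) := by positivity
  have hkey : lam ^ n / Real.Gamma (α * n + α) ≤ Real.exp M / M ^ (α - 1) * (1 / 2) ^ n := by
    rw [div_le_iff₀ hG0]
    calc lam ^ n = Real.exp M / M ^ (α - 1) * (1 / 2) ^ n *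
          (M ^ (α * n + α - 1) * Real.exp (-M)) := by
          rw [hpow, Real.exp_neg, mul_pow]
          field_simp
          rw [← mul_pow]; norm_num
      _ ≤ _ := by gcongr
  rw [Real.norm_of_nonneg (by positivity)]
  calc ((n : ℝ) + 1) * (lam ^ n / Real.Gamma (α * n + α))
      ≤ ((n : ℝ) + 1) * (Real.exp M / M ^ (α - 1) * (1 / 2) ^ n) := by gcongr
    _ = _ := by ring

theorem summable_coeff' {α lam : ℝ} (hα : 0 < α) (hlam : 0 < lam) :
    Summable fun n : ℕ => lam ^ n / Real.Gamma (α * n + α) := by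
  refine (summable_coeff hα hlam).of_nonneg_of_le (fun n => ?_) fun n => ?_
  all_goals
    have hG0 : 0 < Real.Gamma (α * n + α) := Real.Gamma_pos_of_pos (by positivity)
  · positivity
  · exact le_mul_of_one_le_left (by positivity) (by linarith [n.cast_nonneg (α := ℝ)])

theorem mlf_term_bound {α lam z : ℝ} (hα : 0 < α) (hz : |z| ≤ lam) (n : ℕ) :
    ‖z ^ n / Real.Gamma (α * n + α)‖ ≤ lam ^ n / Real.Gamma (α * n + α) := by
  have hG0 : 0 < Real.Gamma (α * n + α) := Real.Gamma_pos_of_pos (by positivity)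
  rw [norm_div, norm_pow, Real.norm_eq_abs, Real.norm_of_nonneg hG0.le]
  gcongr

theorem mlf_arg_bound {α lam u : ℝ} (hα : 0 < α) (hlam : 0 < lam) (hu : u ∈ Icc (0:ℝ) 1) :
    |-lam * u ^ α| ≤ lam := by
  have h1 : u ^ α ≤ 1 := Real.rpow_le_one hu.1 hu.2 hα.le
  have h0 : 0 ≤ u ^ α := Real.rpow_nonneg hu.1 _
  rw [abs_mul, abs_neg, abs_of_pos hlam, abs_of_nonneg h0]
  nlinarith

theorem falpha_continuousOn {α lam : ℝ} (hα : 0 < α) (hlam : 0 < lam) :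
    ContinuousOn (falpha α lam) (Ioc 0 1) := by
  have hm : ContinuousOn (mlf α α) {z | |z| ≤ lam} :=
    continuousOn_tsum (fun n => by fun_prop) (summable_coeff' hα hlam)
      fun n z hz => mlf_term_bound hα hz n
  have hr : ∀ r : ℝ, ContinuousOn (fun u : ℝ => u ^ r) (Ioc 0 1) := fun r u hu =>
    (Real.continuousAt_rpow_const u r (Or.inl hu.1.ne')).continuousWithinAt
  exact (continuousOn_const.mul (hr _)).mul
    (hm.comp (continuousOn_const.mul (hr _)) fun u hu =>
      mlf_arg_bound hα hlam (Ioc_subset_Icc_self hu))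

/-- The kernel has at most the singularity `u ^ (α - 1)`. The endpoint `u = 0` is allowed because
`Real.rpow` gives `0 ^ (α - 1) = 0`, so that `falpha α lam 0 = 0`. -/
theorem falpha_bound {α lam : ℝ} (hα : 0 < α) (hlam : 0 < lam) :
    ∃ A > 0, ∀ u ∈ Icc (0:ℝ) 1, |falpha α lam u| ≤ A * u ^ (α - 1) := by
  have hS := summable_coeff' hα hlam
  refine ⟨lam * ∑' n : ℕ, lam ^ n / Real.Gamma (α * n + α), ?_, fun u hu => ?_⟩
  · have hpos : ∀ n : ℕ, 0 < lam ^ n / Real.Gamma (α * n + α) := fun n =>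
      div_pos (by positivity) (Real.Gamma_pos_of_pos (by positivity))
    exact mul_pos hlam (hS.tsum_pos (fun n => (hpos n).le) 0 (hpos 0))
  · have h1 : |mlf α α (-lam * u ^ α)| ≤ ∑' n : ℕ, lam ^ n / Real.Gamma (α * n + α) :=
      tsum_of_norm_bounded hS.hasSum (mlf_term_bound hα (mlf_arg_bound hα hlam hu))
    have h0 : 0 ≤ u ^ (α - 1) := Real.rpow_nonneg hu.1 _
    rw [falpha, abs_mul, abs_mul, abs_of_pos hlam, abs_of_nonneg h0]
    calc _ ≤ lam * u ^ (α - 1) * ∑' n : ℕ, lam ^ n / Real.Gamma (α * n + α) := by gcongr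
      _ = _ := by ring

/-- Expansion of the kernel in the powers `u ^ (α (n + 1) - 1)`. -/
theorem falpha_hasSum {α lam u : ℝ} (hα : 0 < α) (hlam : 0 < lam) (hu : u ∈ Ioc (0:ℝ) 1) :
    HasSum (fun n : ℕ => lam * ((-lam) ^ n / Real.Gamma (α * n + α)) * u ^ (α * n + α - 1))
      (falpha α lam u) := by
  have hs : Summable fun n : ℕ => (-lam * u ^ α) ^ n / Real.Gamma (α * n + α) :=
    (summable_coeff' hα hlam).of_norm_bounded
      (mlf_term_bound hα (mlf_arg_bound hα hlam (Ioc_subset_Icc_self hu)))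
  refine (hs.hasSum.mul_left (lam * u ^ (α - 1))).congr_fun ?_
  intro n
  rw [add_sub_assoc, Real.rpow_add hu.1, Real.rpow_mul hu.1.le, Real.rpow_natCast, mul_pow]
  ring

/-- Mean value bound for `z ↦ z ^ (β - 1)` on `[u, u + h] ⊆ (0, 1]`, with an exponent `α - 2` of `u`
that is uniform in `β ≥ α`. -/
theorem rpow_sub_bound {α β u h : ℝ} (hα : α ≤ β) (hα0 : 0 < α) (hα1 : α < 1) (hu : 0 < u)
    (hh : 0 ≤ h) (h1 : u + h ≤ 1) :
    |(u + h) ^ (β - 1) - u ^ (β - 1)| ≤ (β + 1) * u ^ (α - 2) * h := by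
  have hd : ∀ z ∈ Icc u (u + h), HasDerivWithinAt (fun z : ℝ => z ^ (β - 1))
      ((β - 1) * z ^ (β - 1 - 1)) (Icc u (u + h)) z := fun z hz =>
    (Real.hasDerivAt_rpow_const (Or.inl (hu.trans_le hz.1).ne')).hasDerivWithinAt
  have hb : ∀ z ∈ Icc u (u + h), ‖(β - 1) * z ^ (β - 1 - 1)‖ ≤ (β + 1) * u ^ (α - 2) := by
    intro z hz
    have hz0 : 0 < z := hu.trans_le hz.1
    rw [norm_mul, Real.norm_eq_abs, Real.norm_of_nonneg (by positivity)]
    have e1 : |β - 1| ≤ β + 1 := abs_le.2 ⟨by linarith, by linarith⟩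
    have e2 : z ^ (β - 1 - 1) ≤ u ^ (α - 2) :=
      (Real.rpow_le_rpow_of_exponent_ge hz0 (hz.2.trans h1) (by linarith)).trans
        (Real.rpow_le_rpow_of_nonpos hu hz.1 (by linarith))
    gcongr
    linarith
  have := (convex_Icc u (u + h)).norm_image_sub_le_of_norm_hasDerivWithin_le hd hb
    (left_mem_Icc.2 (by linarith)) (right_mem_Icc.2 (by linarith))
  simpa [abs_of_nonneg hh] using this

/-- Integrated form of `|f'(u)| ≤ A u ^ (α - 2)`, obtained term by term from the series. -/
theorem falpha_lip {α lam : ℝ} (hα0 : 0 < α) (hα1 : α < 1) (hlam : 0 < lam) :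
    ∃ A > 0, ∀ u h : ℝ, 0 < u → 0 ≤ h → u + h ≤ 1 →
      |falpha α lam (u + h) - falpha α lam u| ≤ A * u ^ (α - 2) * h := by
  have hS := summable_coeff hα0 hlam
  have hpos : ∀ n : ℕ, 0 < lam ^ n / Real.Gamma (α * n + α) := fun n =>
    div_pos (by positivity) (Real.Gamma_pos_of_pos (by positivity))
  refine ⟨2 * lam * ∑' n : ℕ, ((n : ℝ) + 1) * (lam ^ n / Real.Gamma (α * n + α)), ?_,
    fun u h hu hh h1 => ?_⟩
  · have := hS.tsum_pos (fun n => (mul_pos (by positivity) (hpos n)).le) 0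
      (mul_pos (by positivity) (hpos 0))
    positivity
  have hs := (falpha_hasSum hα0 hlam (u := u + h) ⟨by linarith, h1⟩).sub
    (falpha_hasSum hα0 hlam (u := u) ⟨hu, by linarith⟩)
  rw [← hs.tsum_eq]
  rw [show ∀ S : ℝ, 2 * lam * S * u ^ (α - 2) * h = 2 * lam * u ^ (α - 2) * h * S from
    fun S => by ring, ← Real.norm_eq_abs]
  refine tsum_of_norm_bounded (hS.hasSum.mul_left (2 * lam * u ^ (α - 2) * h)) fun n => ?_
  have hn : (0:ℝ) ≤ n := n.cast_nonneg
  have hG0 : 0 < Real.Gamma (α * n + α) := Real.Gamma_pos_of_pos (by positivity)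
  have hβ := rpow_sub_bound (α := α) (β := α * n + α) (by nlinarith) hα0 hα1 hu hh h1
  rw [← mul_sub, norm_mul, norm_mul, norm_div, norm_pow, norm_neg, Real.norm_of_nonneg hlam.le,
    Real.norm_of_nonneg hG0.le, Real.norm_eq_abs]
  have h2 : (α * n + α + 1) * u ^ (α - 2) * h ≤ (2 * (n + 1)) * u ^ (α - 2) * h := by
    gcongr
    nlinarith
  have := hpos n
  calc _ ≤ lam * (lam ^ n / Real.Gamma (α * n + α)) * ((2 * (n + 1)) * u ^ (α - 2) * h) := by
        gcongr
        exact hβ.trans h2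
    _ = _ := by ring

/-- Interpolation between `falpha_bound` (used when `u ≤ h`) and `falpha_lip` (used when `h ≤ u`):
both are bounded by `u ^ (α - 1) (h / u) ^ p`. -/
theorem falpha_increment {α lam p : ℝ} (hα0 : 0 < α) (hα1 : α < 1) (hlam : 0 < lam)
    (hp0 : 0 < p) (hp1 : p ≤ 1) :
    ∃ A > 0, ∀ u h : ℝ, 0 < u → 0 < h → u + h ≤ 1 →
      |falpha α lam (u + h) - falpha α lam u| ≤ A * u ^ (α - 1 - p) * h ^ p := by
  obtain ⟨A, hA, hb⟩ := falpha_bound hα0 hlam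
  obtain ⟨B, hB, hl⟩ := falpha_lip hα0 hα1 hlam
  refine ⟨2 * A + B, by positivity, fun u h hu hh h1 => ?_⟩
  have hR : u ^ (α - 1 - p) * h ^ p = u ^ (α - 1) * (h / u) ^ p := by
    rw [Real.rpow_sub hu, Real.div_rpow hh.le hu.le]
    ring
  have hu1 : 0 < u ^ (α - 1) := by positivity
  rw [mul_assoc, hR]
  rcases le_total h u with hhu | hhu
  · have e1 : u ^ (α - 2) * h = u ^ (α - 1) * (h / u) := by
      rw [show α - 2 = α - 1 - 1 by ring, Real.rpow_sub_one hu.ne']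
      ring
    have e2 : h / u ≤ (h / u) ^ p := by
      simpa using Real.rpow_le_rpow_of_exponent_ge (div_pos hh hu) ((div_le_one hu).2 hhu) hp1
    calc _ ≤ B * u ^ (α - 2) * h := hl u h hu hh.le h1
      _ = B * (u ^ (α - 1) * (h / u)) := by rw [mul_assoc, e1]
      _ ≤ (2 * A + B) * (u ^ (α - 1) * (h / u) ^ p) := by
        gcongr
        linarith
  · have e2 : 1 ≤ (h / u) ^ p := Real.one_le_rpow ((one_le_div hu).2 hhu) hp0.le
    have e3 := hb u ⟨hu.le, by linarith⟩
    have e4 := hb (u + h) ⟨by linarith, h1⟩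
    have e5 : (u + h) ^ (α - 1) ≤ u ^ (α - 1) :=
      Real.rpow_le_rpow_of_nonpos hu (by linarith) (by linarith)
    calc _ ≤ |falpha α lam (u + h)| + |falpha α lam u| := abs_sub _ _
      _ ≤ A * u ^ (α - 1) + A * u ^ (α - 1) := by
        gcongr
        exact e4.trans (by gcongr)
      _ = (2 * A) * (u ^ (α - 1) * 1) := by ring
      _ ≤ (2 * A + B) * (u ^ (α - 1) * (h / u) ^ p) := by
        gcongr
        linarith

/-! ### Convolution with a singular kernel -/

/-- The convolution estimate for an abstract kernel `f` with a singularity of order `α - 1` and a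
function `W` of Hölder regularity `γ` vanishing at `0`. The hypothesis `p < α + γ` makes
`u ^ (α + γ - p - 1)` integrable at `0`. -/
theorem conv_increment {f W : ℝ → ℝ} {α p γ A B : ℝ} (hα0 : 0 < α) (hγ0 : 0 < γ)
    (hp0 : 0 < p) (hp1 : p ≤ 1) (hpq : p < α + γ) (hA : 0 < A) (hB : 0 < B)
    (hfc : ContinuousOn f (Ioc 0 1))
    (hf : ∀ u ∈ Icc (0:ℝ) 1, |f u| ≤ A * u ^ (α - 1))
    (hfi : ∀ u h : ℝ, 0 < u → 0 < h → u + h ≤ 1 → |f (u + h) - f u| ≤ A * u ^ (α - 1 - p) * h ^ p)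
    (hWc : ContinuousOn W (Icc 0 1)) (hW0 : W 0 = 0)
    (hW : ∀ x ∈ Icc (0:ℝ) 1, ∀ y ∈ Icc (0:ℝ) 1, |W x - W y| ≤ B * |x - y| ^ γ)
    {t h : ℝ} (ht : 0 ≤ t) (hh : 0 < h) (h1 : t + h ≤ 1) :
    |(∫ s in (0:ℝ)..(t + h), f (t + h - s) * W s) - ∫ s in (0:ℝ)..t, f (t - s) * W s|
      ≤ A * B * (1 / α + 1 / (α + γ - p) + 1 / p) * h ^ p := by
  have hf1 : IntervalIntegrable f volume 0 1 := by
    have hg : IntervalIntegrable (fun u : ℝ => A * u ^ (α - 1)) volume 0 1 :=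
      (intervalIntegral.intervalIntegrable_rpow' (by linarith)).const_mul A
    refine hg.mono_fun' ?_ ?_
    · rw [uIoc_of_le zero_le_one]
      exact hfc.aestronglyMeasurable measurableSet_Ioc
    · rw [uIoc_of_le zero_le_one]
      filter_upwards [ae_restrict_mem measurableSet_Ioc] with u hu
      exact hf u (Ioc_subset_Icc_self hu)
  have hfab : ∀ a b : ℝ, 0 ≤ a → a ≤ b → b ≤ 1 → IntervalIntegrable f volume a b :=
    fun a b ha hab hb => hf1.mono_set (by
      rw [uIcc_of_le hab, uIcc_of_le zero_le_one]; exact Icc_subset_Icc ha hb)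
  have hrefl : ∀ r a b : ℝ, 0 ≤ a → a ≤ b → b ≤ r → r ≤ 1 →
      IntervalIntegrable (fun s => f (r - s)) volume a b := by
    intro r a b ha hab hb hr
    have := (hfab (r - b) (r - a) (by linarith) (by linarith) (by linarith)).comp_sub_left r
    simpa using this.symm
  have hreflW : ∀ r a b : ℝ, 0 ≤ a → a ≤ b → b ≤ r → r ≤ 1 →
      IntervalIntegrable (fun s => f (r - s) * W s) volume a b := by
    intro r a b ha hab hb hr
    refine (hrefl r a b ha hab hb hr).mul_continuousOn (hWc.mono ?_)
    rw [uIcc_of_le hab]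
    exact Icc_subset_Icc ha (hb.trans hr)
  set T := t + h with hT
  have htT : t ≤ T := by linarith
  -- Replace `W s` by `W s - W t` in both integrals. What remains is `W t` times the difference of
  -- the integrals of `f` over `[0, T]` and `[0, t]`.
  have hsplit : (∫ s in (0:ℝ)..T, f (T - s) * W s) - ∫ s in (0:ℝ)..t, f (t - s) * W s
      = (∫ s in t..T, f (T - s) * (W s - W t))
        + (∫ s in (0:ℝ)..t, (f (T - s) - f (t - s)) * (W s - W t))
        + ∫ u in t..T, W t * f u := by
    have i1 := hreflW T 0 t le_rfl ht htT h1
    have i2 := hreflW T t T ht htT le_rfl h1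
    have i3 := hreflW t 0 t le_rfl ht le_rfl (htT.trans h1)
    have j1 := hrefl T 0 t le_rfl ht htT h1
    have j2 := hrefl T t T ht htT le_rfl h1
    have j3 := hrefl t 0 t le_rfl ht le_rfl (htT.trans h1)
    have k1 : (∫ s in t..T, f (T - s) * (W s - W t))
        = (∫ s in t..T, f (T - s) * W s) - (∫ s in t..T, f (T - s)) * W t := by
      rw [← intervalIntegral.integral_mul_const, ← intervalIntegral.integral_sub i2 (j2.mul_const _)]
      simp only [mul_sub]
    have k2 : (∫ s in (0:ℝ)..t, (f (T - s) - f (t - s)) * (W s - W t))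
        = (∫ s in (0:ℝ)..t, f (T - s) * W s) - (∫ s in (0:ℝ)..t, f (t - s) * W s)
          - ((∫ s in (0:ℝ)..t, f (T - s)) - ∫ s in (0:ℝ)..t, f (t - s)) * W t := by
      rw [← intervalIntegral.integral_sub i1 i3, ← intervalIntegral.integral_sub j1 j3,
        ← intervalIntegral.integral_mul_const,
        ← intervalIntegral.integral_sub (i1.sub i3) ((j1.sub j3).mul_const _)]
      congr 1
      ext s
      ring
    have k3 : (∫ s in (0:ℝ)..T, f (T - s) * W s)
        = (∫ s in (0:ℝ)..t, f (T - s) * W s) + ∫ s in t..T, f (T - s) * W s :=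
      (intervalIntegral.integral_add_adjacent_intervals i1 i2).symm
    have k4 : (∫ s in (0:ℝ)..t, f (T - s)) + (∫ s in t..T, f (T - s))
        = (∫ s in (0:ℝ)..t, f (t - s)) + ∫ u in t..T, f u := by
      rw [intervalIntegral.integral_add_adjacent_intervals j1 j2,
        intervalIntegral.integral_comp_sub_left (fun u => f u),
        intervalIntegral.integral_comp_sub_left (fun u => f u)]
      simp only [sub_self, sub_zero]
      exact (intervalIntegral.integral_add_adjacent_intervals
        (hfab 0 t le_rfl ht (htT.trans h1)) (hfab t T ht htT h1)).symm
    rw [k1, k2, k3, intervalIntegral.integral_const_mul]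
    linear_combination W t * k4
  have b1 : |∫ s in t..T, f (T - s) * (W s - W t)| ≤ A * B * (1 / α) * h ^ p := by
    have hr : IntervalIntegrable (fun s : ℝ => (T - s) ^ (α - 1)) volume t T := by
      have := (intervalIntegral.intervalIntegrable_rpow' (r := α - 1) (a := 0) (b := T - t)
        (by linarith)).comp_sub_left T
      simpa using this.symm
    have hle : ∀ s ∈ Ioc t T,
        ‖f (T - s) * (W s - W t)‖ ≤ A * B * h ^ γ * (T - s) ^ (α - 1) := by
      intro s hs
      have e1 := hf (T - s) ⟨by linarith [hs.2], by linarith [hs.1]⟩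
      have e2 : |W s - W t| ≤ B * h ^ γ := by
        refine (hW s ⟨by linarith [hs.1], by linarith [hs.2]⟩ t ⟨ht, by linarith⟩).trans ?_
        rw [abs_of_pos (by linarith [hs.1] : 0 < s - t)]
        gcongr
        · linarith [hs.1]
        · linarith [hs.2]
      rw [norm_mul]
      calc _ ≤ (A * (T - s) ^ (α - 1)) * (B * h ^ γ) :=
            mul_le_mul e1 e2 (abs_nonneg _) ((abs_nonneg _).trans e1)
        _ = _ := by ring
    have hI : ∫ s in t..T, (T - s) ^ (α - 1) = h ^ α / α := by
      rw [intervalIntegral.integral_comp_sub_left (fun u => u ^ (α - 1)),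
        integral_rpow (Or.inl (by linarith))]
      simp [hT, Real.zero_rpow hα0.ne']
    calc _ ≤ ∫ s in t..T, A * B * h ^ γ * (T - s) ^ (α - 1) :=
          intervalIntegral.norm_integral_le_of_norm_le htT (ae_of_all _ hle) (hr.const_mul _)
      _ = A * B * (1 / α) * h ^ (α + γ) := by
          rw [intervalIntegral.integral_const_mul, hI, Real.rpow_add hh]
          ring
      _ ≤ _ := by
          gcongr ?_ * ?_
          exact Real.rpow_le_rpow_of_exponent_ge hh (by linarith) hpq.le
  have b2 : |∫ s in (0:ℝ)..t, (f (T - s) - f (t - s)) * (W s - W t)|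
      ≤ A * B * (1 / (α + γ - p)) * h ^ p := by
    have hr : IntervalIntegrable (fun s : ℝ => (t - s) ^ (α + γ - p - 1)) volume 0 t := by
      have := (intervalIntegral.intervalIntegrable_rpow' (r := α + γ - p - 1) (a := 0) (b := t)
        (by linarith)).comp_sub_left t
      simpa using this.symm
    have hle : ∀ s ∈ Ioc 0 t, ‖(f (T - s) - f (t - s)) * (W s - W t)‖
        ≤ A * B * h ^ p * (t - s) ^ (α + γ - p - 1) := by
      intro s hs
      -- The increment bound on `f` is unavailable at `s = t`, but there `W s - W t = 0`.
      rcases eq_or_lt_of_le hs.2 with rfl | hst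
      · simp only [sub_self, mul_zero, norm_zero]
        positivity
      have hts : 0 < t - s := sub_pos.2 hst
      have e1 := hfi (t - s) h hts hh (by linarith [hs.1])
      rw [show t - s + h = T - s by rw [hT]; ring] at e1
      have e2 := hW s ⟨hs.1.le, by linarith⟩ t ⟨ht, by linarith⟩
      rw [abs_sub_comm s t, abs_of_pos hts] at e2
      rw [norm_mul]
      calc _ ≤ (A * (t - s) ^ (α - 1 - p) * h ^ p) * (B * (t - s) ^ γ) :=
            mul_le_mul e1 e2 (abs_nonneg _) ((abs_nonneg _).trans e1)
        _ = _ := by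
            rw [show α + γ - p - 1 = (α - 1 - p) + γ by ring, Real.rpow_add hts]
            ring
    have hq : 0 < α + γ - p := by linarith
    have hI : ∫ s in (0:ℝ)..t, (t - s) ^ (α + γ - p - 1) = t ^ (α + γ - p) / (α + γ - p) := by
      rw [intervalIntegral.integral_comp_sub_left (fun u => u ^ (α + γ - p - 1)),
        integral_rpow (Or.inl (by linarith))]
      simp [Real.zero_rpow hq.ne']
    calc _ ≤ ∫ s in (0:ℝ)..t, A * B * h ^ p * (t - s) ^ (α + γ - p - 1) :=
          intervalIntegral.norm_integral_le_of_norm_le ht (ae_of_all _ hle) (hr.const_mul _)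
      _ = A * B * (t ^ (α + γ - p) / (α + γ - p)) * h ^ p := by
          rw [intervalIntegral.integral_const_mul, hI]
          ring
      _ ≤ _ := by
          gcongr
          exact Real.rpow_le_one ht (by linarith) hq.le
  have b3 : |∫ u in t..T, W t * f u| ≤ A * B * (1 / p) * h ^ p := by
    have hle : ∀ u ∈ Ioc t T, ‖W t * f u‖ ≤ A * B * u ^ (p - 1) := by
      intro u hu
      have hu0 : 0 < u := ht.trans_lt hu.1
      have hu1 : u ≤ 1 := hu.2.trans h1
      have e1 := hf u ⟨hu0.le, hu1⟩
      -- `W 0 = 0` gives `|W t| ≤ B t ^ γ`, and `t < u`; this offsets the size of `f`.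
      have e2 : |W t| ≤ B * u ^ γ := by
        have := hW t ⟨ht, by linarith⟩ 0 ⟨le_rfl, zero_le_one⟩
        rw [hW0, sub_zero, sub_zero, abs_of_nonneg ht] at this
        refine this.trans ?_
        gcongr
        exact hu.1.le
      rw [norm_mul]
      calc _ ≤ (B * u ^ γ) * (A * u ^ (α - 1)) :=
            mul_le_mul e2 e1 (abs_nonneg _) ((abs_nonneg _).trans e2)
        _ = A * B * u ^ (γ + (α - 1)) := by rw [Real.rpow_add hu0]; ring
        _ ≤ _ := by
            gcongr ?_ * ?_
            exact Real.rpow_le_rpow_of_exponent_ge hu0 hu1 (by linarith)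
    have hI : ∫ u in t..T, u ^ (p - 1) = (T ^ p - t ^ p) / p := by
      rw [integral_rpow (Or.inl (by linarith))]
      simp
    calc _ ≤ ∫ u in t..T, A * B * u ^ (p - 1) :=
          intervalIntegral.norm_integral_le_of_norm_le htT (ae_of_all _ hle)
            ((intervalIntegral.intervalIntegrable_rpow' (by linarith)).const_mul _)
      _ = A * B * (1 / p) * (T ^ p - t ^ p) := by
          rw [intervalIntegral.integral_const_mul, hI]
          ring
      _ ≤ _ := by
          gcongr
          linarith [Real.rpow_add_le_add_rpow ht hh.le hp0.le hp1]
  rw [hsplit]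
  calc _ ≤ _ := abs_add_three _ _ _
    _ ≤ _ := add_le_add (add_le_add b1 b2) b3
    _ = _ := by ring

theorem conv_holder {α lam p γ : ℝ} {W : ℝ → ℝ} (hα0 : 0 < α) (hα1 : α < 1) (hlam : 0 < lam)
    (hγ0 : 0 < γ) (hp0 : 0 < p) (hp1 : p ≤ 1) (hpq : p < α + γ)
    (hWc : ContinuousOn W (Icc 0 1)) (hW0 : W 0 = 0) (hW : HolderOn W γ (Icc 0 1)) :
    HolderOn (fun t => ∫ s in (0:ℝ)..t, falpha α lam (t - s) * W s) p (Icc 0 1) := by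
  obtain ⟨A₁, hA₁, hb⟩ := falpha_bound hα0 hlam
  obtain ⟨A₂, hA₂, hi⟩ := falpha_increment hα0 hα1 hlam hp0 hp1
  obtain ⟨B, hB, hW⟩ := hW
  have hq : 0 < α + γ - p := by linarith
  have key : ∀ x ∈ Icc (0:ℝ) 1, ∀ y ∈ Icc (0:ℝ) 1, x < y →
      |(∫ s in (0:ℝ)..y, falpha α lam (y - s) * W s)
        - ∫ s in (0:ℝ)..x, falpha α lam (x - s) * W s|
      ≤ (A₁ + A₂) * B * (1 / α + 1 / (α + γ - p) + 1 / p) * (y - x) ^ p := by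
    intro x hx y hy hxy
    have := conv_increment (A := A₁ + A₂) hα0 hγ0 hp0 hp1 hpq (by positivity) hB
      (falpha_continuousOn hα0 hlam)
      (fun u hu => (hb u hu).trans <| by
        have := Real.rpow_nonneg hu.1 (α - 1)
        gcongr
        linarith)
      (fun u h hu hh h1 => (hi u h hu hh h1).trans <| by
        gcongr
        linarith)
      hWc hW0 hW hx.1 (sub_pos.2 hxy) (by linarith [hy.2])
    rwa [add_sub_cancel] at this
  refine ⟨(A₁ + A₂) * B * (1 / α + 1 / (α + γ - p) + 1 / p), by positivity, fun x hx y hy => ?_⟩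
  rcases lt_trichotomy x y with hxy | rfl | hxy
  · rw [abs_sub_comm, abs_sub_comm x y, abs_of_pos (sub_pos.2 hxy)]
    exact key x hx y hy hxy
  · simp only [sub_self, abs_zero]
    positivity
  · rw [abs_of_pos (sub_pos.2 hxy)]
    exact key y hy x hx hxy

/-- if `Z` is continuous on `[0,1]` with `Z(0)=0` and Hölder regularity
`γ` for every `γ < H/2`, and `X_t = ∫_0^t s f^{α,λ}(t-s) ds + c ∫_0^t f^{α,λ}(t-s) Z_s ds`,
then for every `ε > 0`, `X` has Hölder regularity `((α + H/2) ∧ 1) - ε` on `[0,1]`. -/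
theorem holder_bootstrap (α lam c H : ℝ) (hα : α ∈ Set.Ioo (0:ℝ) 1) (hlam : 0 < lam)
    (hc : 0 ≤ c) (hH : H ∈ Set.Ioo (0:ℝ) 1)
    (Z : ℝ → ℝ) (hZcont : ContinuousOn Z (Set.Icc 0 1)) (hZ0 : Z 0 = 0)
    (hZhold : ∀ γ : ℝ, 0 < γ → γ < H / 2 → HolderOn Z γ (Set.Icc 0 1))
    (X : ℝ → ℝ)
    (hX : ∀ t ∈ Set.Icc (0:ℝ) 1,
      X t = (∫ s in (0:ℝ)..t, s * falpha α lam (t - s))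
            + c * ∫ s in (0:ℝ)..t, falpha α lam (t - s) * Z s) :
    ∀ ε > 0, HolderOn X (min (α + H / 2) 1 - ε) (Set.Icc 0 1) := by
  intro ε hε
  obtain ⟨hα0, hα1⟩ := hα
  have hH0 := hH.1
  set m := min (α + H / 2) 1 with hm
  have hmα : α < m := lt_min (by linarith) hα1
  -- Work with an exponent `p ∈ (α, m)` above `m - ε`: unlike `m - ε` itself, `p` is positive.
  obtain ⟨p, hp, hpm⟩ := exists_between (max_lt (sub_lt_self m hε) hmα)
  have hpδ : m - ε < p := (le_max_left _ _).trans_lt hp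
  have hpα : α < p := (le_max_right _ _).trans_lt hp
  have hp1 : p ≤ 1 := hpm.le.trans (min_le_right _ _)
  obtain ⟨γ, hγ, hγH⟩ := exists_between
    (show p - α < H / 2 by linarith [min_le_left (α + H / 2) 1])
  have hγ0 : 0 < γ := by linarith
  -- `X` is the sum of two convolutions, with `s ↦ s` (Lipschitz) and with `Z`.
  have hid : HolderOn (fun s : ℝ => s) 1 (Icc 0 1) :=
    ⟨1, one_pos, fun x _ y _ => by simp⟩
  obtain ⟨C₁, hC₁, h₁⟩ := conv_holder (W := fun s => s) hα0 hα1 hlam one_pos (hα0.trans hpα) hp1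
    (by linarith) continuousOn_id rfl hid
  obtain ⟨C₂, hC₂, h₂⟩ := conv_holder hα0 hα1 hlam hγ0 (hα0.trans hpα) hp1
    (by linarith) hZcont hZ0 (hZhold γ hγ0 hγH)
  refine ⟨C₁ + c * C₂, by positivity, fun x hx y hy => ?_⟩
  -- `m - ε` may be negative, where `0 ^ (m - ε)` is the `Real.rpow` value `0`.
  rcases eq_or_ne x y with rfl | hxy
  · simp only [sub_self, abs_zero]
    positivity
  have hd0 : 0 < |x - y| := abs_pos.2 (sub_ne_zero.2 hxy)
  have hd1 : |x - y| ≤ 1 := abs_le.2 ⟨by linarith [hx.1, hy.2], by linarith [hx.2, hy.1]⟩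
  have e₁ := h₁ x hx y hy
  have e₂ := h₂ x hx y hy
  rw [hX x hx, hX y hy]
  simp only [mul_comm _ (falpha _ _ _)]
  calc _ ≤ C₁ * |x - y| ^ p + c * (C₂ * |x - y| ^ p) := by
        rw [add_sub_add_comm, ← mul_sub]
        refine (abs_add_le _ _).trans (add_le_add e₁ ?_)
        rw [abs_mul, abs_of_nonneg hc]
        gcongr
    _ = (C₁ + c * C₂) * |x - y| ^ p := by ring
    _ ≤ _ := by
        gcongr ?_ * ?_
        exact Real.rpow_le_rpow_of_exponent_ge hd0 hd1 hpδ.le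
end

section
/- Let α ∈ (0,1), λ > 0, c ≥ 0. Let B : [0,∞) → ℝ be a function with B(0) = 0 such that for every ε > 0 and every R > 0, B has Hölder regularity 1/2 − ε on [0, R]. Let X : [0,1] → ℝ be continuous, nondecreasing, with X(0) = 0, satisfying X_t = ∫_0^t s f^{α,λ}(t−s) ds + c ∫_0^t f^{α,λ}(t−s) B(X_s) ds for all t ∈ [0,1]. Then for every ε > 0, X has Hölder regularity (1 ∧ 2α) − ε on [0,1]. -/
/-!
The Volterra equation is bootstrapped. The Mittag-Leffler kernel `K = f^{α,λ}` satisfies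
`|K u| ≤ C u^{α-1}` and `|K v - K u| ≤ C u^{α-1} (v - u) / v` on `(0,1]` (`falpha_bounds`), because
`y ↦ E_{α,α}(-λ y)` is bounded and Lipschitz on `[0,1]`; this rests on the super-geometric decay of
`1 / Γ (α n + α)` (`inv_Gamma_le_geometric`).

Convolution with such a kernel therefore turns a `δ`-Hölder function vanishing at `0` into a
`θ`-Hölder function, for every `θ ≤ 1` with `θ < α + δ` (`holderOn_conv`). If `X` is `γ`-Hölder,
then `B ∘ X` is Hölder of any exponent below `γ / 2` (merely bounded if `γ = 0`), so the equation makes `X` Hölder of any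
exponent `θ ≤ 1` below `α + γ / 2`. Starting from `γ = 0` (boundedness of `X`), finitely many
rounds reach every exponent below the fixed point `2 α`, capped at `1`.
-/


open MeasureTheory Filter Set

/-! ### Bounds on the Mittag-Leffler series -/

/-- Elementary lower bound for `Γ`, obtained by restricting Euler's integral for `Γ (x + 1)` to
`(A, ∞)`. Since `A` is arbitrary, `1 / Γ (α n + α)` decays faster than any geometric sequence. -/
lemma exp_mul_rpow_le_mul_Gamma {x A : ℝ} (hx : 0 < x) (hA : 0 < A) :
    Real.exp (-A) * A ^ x ≤ x * Real.Gamma x := by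
  rw [← Real.Gamma_add_one hx.ne', Real.Gamma_eq_integral (by linarith)]
  have hint := Real.GammaIntegral_convergent (s := x + 1) (by linarith)
  calc Real.exp (-A) * A ^ x = ∫ t in Ioi A, Real.exp (-t) * A ^ x := by
        rw [integral_mul_const, integral_exp_neg_Ioi]
    _ ≤ ∫ t in Ioi A, Real.exp (-t) * t ^ (x + 1 - 1) := by
        apply setIntegral_mono_on
        · exact (integrableOn_exp_neg_Ioi A).mul_const _
        · exact hint.mono_set (Ioi_subset_Ioi hA.le)
        · exact measurableSet_Ioi
        · intro t ht
          have : A ^ x ≤ t ^ x := Real.rpow_le_rpow hA.le (le_of_lt ht) hx.le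
          rw [add_sub_cancel_right]
          gcongr
    _ ≤ _ := by
        apply setIntegral_mono_set hint
        · filter_upwards [ae_restrict_mem measurableSet_Ioi] with t ht
          have : (0:ℝ) < t := ht
          positivity
        · exact (Ioi_subset_Ioi hA.le).eventuallyLE

lemma inv_Gamma_le_geometric {a q : ℝ} (ha : a ∈ Ioo (0:ℝ) 1) (hq : 0 < q) :
    ∃ C > 0, ∀ n : ℕ, 0 < Real.Gamma (a * n + a) ∧
      1 / Real.Gamma (a * n + a) ≤ C * ((n + 1) * q ^ n) := by
  obtain ⟨ha0, ha1⟩ := ha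
  -- `A` is chosen so that `A ^ a = q⁻¹`
  set A : ℝ := q ^ (-a⁻¹) with hAdef
  have hA : 0 < A := Real.rpow_pos_of_pos hq _
  refine ⟨Real.exp A * q, by positivity, fun n => ?_⟩
  have hx : 0 < a * n + a := by positivity
  have hG := Real.Gamma_pos_of_pos hx
  refine ⟨hG, ?_⟩
  have h := exp_mul_rpow_le_mul_Gamma hx hA
  have hAx : A ^ (a * n + a) = (q ^ (n + 1))⁻¹ := by
    rw [hAdef, ← Real.rpow_mul hq.le]
    have : -a⁻¹ * (a * n + a) = -((n + 1 : ℕ) : ℝ) := by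
      push_cast; field_simp
    rw [this, Real.rpow_neg hq.le, Real.rpow_natCast]
  rw [hAx, Real.exp_neg, ← mul_inv, inv_eq_one_div, div_le_iff₀ (by positivity)] at h
  rw [div_le_iff₀ hG]
  have h2 : a * n + a ≤ n + 1 := by
    nlinarith [(Nat.cast_nonneg n : (0:ℝ) ≤ n)]
  calc (1:ℝ) ≤ (a * n + a) * Real.Gamma (a * n + a) * (Real.exp A * q ^ (n + 1)) := h
    _ ≤ (n + 1) * Real.Gamma (a * n + a) * (Real.exp A * q ^ (n + 1)) := by gcongr
    _ = _ := by ring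

/-- The entire function `y ↦ E_{a,a}(-λ y)` is bounded and Lipschitz on `[0,1]`. -/
lemma mlf_bounds {a lam : ℝ} (ha : a ∈ Ioo (0:ℝ) 1) (hlam : 0 < lam) :
    ∃ L > 0, (∀ y ∈ Icc (0:ℝ) 1, |mlf a a (-lam * y)| ≤ L) ∧
      ∀ y ∈ Icc (0:ℝ) 1, ∀ z ∈ Icc (0:ℝ) 1,
        |mlf a a (-lam * y) - mlf a a (-lam * z)| ≤ L * |y - z| := by
  obtain ⟨C, hC, hG⟩ := inv_Gamma_le_geometric ha (q := (2 * lam)⁻¹) (by positivity)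
  -- majorant of both the terms of the series and their Lipschitz constants on `[0,1]`
  set m : ℕ → ℝ := fun n => C * ((n + 1) ^ 2 * (1 / 2) ^ n) with hm
  have hms : Summable m := by
    have h2 := summable_pow_mul_geometric_of_norm_lt_one (R := ℝ) 2 (r := 1 / 2)
      (by norm_num)
    have h1 := summable_pow_mul_geometric_of_norm_lt_one (R := ℝ) 1 (r := 1 / 2)
      (by norm_num)
    have h0 := summable_pow_mul_geometric_of_norm_lt_one (R := ℝ) 0 (r := 1 / 2)
      (by norm_num)
    refine ((h2.add ((h1.mul_left 2).add h0)).mul_left C).congr fun n => ?_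
    simp only [hm]; ring
  have hm0 : ∀ n, 0 ≤ m n := fun n => by simp only [hm]; positivity
  have hcoef : ∀ n : ℕ, lam ^ n * (1 / Real.Gamma (a * n + a)) ≤ C * ((n + 1) * (1 / 2) ^ n) := by
    intro n
    calc _ ≤ lam ^ n * (C * ((n + 1) * (2 * lam)⁻¹ ^ n)) := by
          have := (hG n).2; gcongr
      _ = C * ((n + 1) * (lam * (2 * lam)⁻¹) ^ n) := by rw [mul_pow]; ring
      _ = _ := by rw [show lam * (2 * lam)⁻¹ = 1 / 2 by field_simp]
  have hcoef0 : ∀ n : ℕ, 0 ≤ lam ^ n * (1 / Real.Gamma (a * n + a)) := fun n => by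
    have := (hG n).1; positivity
  have hform : ∀ (y : ℝ) (n : ℕ), (-lam * y) ^ n / Real.Gamma (a * n + a)
      = (-1) ^ n * (lam ^ n * (1 / Real.Gamma (a * n + a))) * y ^ n := by
    intro y n; rw [show -lam * y = (-1) * lam * y by ring, mul_pow, mul_pow]; ring
  have hterm : ∀ y ∈ Icc (0:ℝ) 1, ∀ n : ℕ,
      ‖(-lam * y) ^ n / Real.Gamma (a * n + a)‖ ≤ m n := by
    intro y hy n
    rw [hform, Real.norm_eq_abs, abs_mul, abs_mul, abs_pow, abs_neg, abs_one, one_pow, one_mul,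
      abs_of_nonneg (hcoef0 n), abs_of_nonneg (pow_nonneg hy.1 n)]
    calc _ ≤ C * ((n + 1) * (1 / 2) ^ n) * 1 := by
          apply mul_le_mul (hcoef n) (pow_le_one₀ hy.1 hy.2) (pow_nonneg hy.1 n) (by positivity)
      _ ≤ m n := by
          simp only [hm, mul_one]
          gcongr
          nlinarith [(Nat.cast_nonneg n : (0:ℝ) ≤ n)]
  have hsum : ∀ y ∈ Icc (0:ℝ) 1,
      Summable fun n : ℕ => (-lam * y) ^ n / Real.Gamma (a * n + a) :=
    fun y hy => Summable.of_norm_bounded hms (hterm y hy)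
  have hS : 0 ≤ ∑' n, m n := tsum_nonneg hm0
  refine ⟨∑' n, m n + 1, by linarith, fun y hy => ?_, fun y hy z hz => ?_⟩
  · have := tsum_of_norm_bounded hms.hasSum (hterm y hy)
    rw [Real.norm_eq_abs] at this
    unfold mlf
    linarith
  · have key : ∀ n : ℕ, ‖(-lam * y) ^ n / Real.Gamma (a * n + a)
        - (-lam * z) ^ n / Real.Gamma (a * n + a)‖ ≤ m n * |y - z| := by
      intro n
      rw [hform, hform, ← mul_sub, Real.norm_eq_abs, abs_mul, abs_mul, abs_pow, abs_neg, abs_one,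
        one_pow, one_mul, abs_of_nonneg (hcoef0 n)]
      have h1 : |y ^ n - z ^ n| ≤ (n + 1) * |y - z| := by
        refine (abs_pow_sub_pow_le y z n).trans ?_
        have hle : max |y| |z| ^ (n - 1) ≤ 1 := by
          apply pow_le_one₀ (by positivity)
          rw [abs_of_nonneg hy.1, abs_of_nonneg hz.1]
          exact max_le hy.2 hz.2
        calc |y - z| * n * max |y| |z| ^ (n - 1) ≤ |y - z| * n * 1 := by gcongr
          _ ≤ _ := by nlinarith [abs_nonneg (y - z)]
      calc _ ≤ (C * ((n + 1) * (1 / 2) ^ n)) * ((n + 1) * |y - z|) :=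
            mul_le_mul (hcoef n) h1 (abs_nonneg _) (by positivity)
        _ = _ := by simp only [hm]; ring
    have := tsum_of_norm_bounded (hms.hasSum.mul_right |y - z|) key
    rw [Real.norm_eq_abs, (hsum y hy).tsum_sub (hsum z hz)] at this
    unfold mlf
    nlinarith [abs_nonneg (y - z)]

/-! ### The kernel `f^{α,λ}` -/

lemma rpow_sub_rpow_le {u v p : ℝ} (hu : 0 < u) (huv : u ≤ v) (hp : p ≤ 1) :
    v ^ p - u ^ p ≤ v ^ p * ((v - u) / v) := by
  have hv : 0 < v := hu.trans_le huv
  have h : u / v ≤ (u / v) ^ p :=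
    Real.self_le_rpow_of_le_one (by positivity) ((div_le_one hv).2 huv) hp
  rw [Real.div_rpow hu.le hv.le, le_div_iff₀ (by positivity)] at h
  rw [sub_div, div_self hv.ne']
  linarith

/-- The three properties of the kernel `f^{α,λ}` which drive the smoothing estimate. -/
lemma falpha_bounds {a lam : ℝ} (ha : a ∈ Ioo (0:ℝ) 1) (hlam : 0 < lam) :
    ∃ C > 0, (∀ u ∈ Icc (0:ℝ) 1, |falpha a lam u| ≤ C * u ^ (a - 1)) ∧
      (∀ u v, 0 < u → u ≤ v → v ≤ 1 →
        |falpha a lam v - falpha a lam u| ≤ C * (u ^ (a - 1) * ((v - u) / v))) ∧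
      IntervalIntegrable (falpha a lam) volume 0 1 := by
  obtain ⟨L, hL, hb, hlip⟩ := mlf_bounds ha hlam
  obtain ⟨ha0, ha1⟩ := ha
  have hpow : ∀ u ∈ Icc (0:ℝ) 1, u ^ a ∈ Icc (0:ℝ) 1 := fun u hu =>
    ⟨Real.rpow_nonneg hu.1 _, Real.rpow_le_one hu.1 hu.2 ha0.le⟩
  have hbound : ∀ u ∈ Icc (0:ℝ) 1, |falpha a lam u| ≤ 2 * lam * L * u ^ (a - 1) := by
    intro u hu
    have h := hb _ (hpow u hu)
    have h0 : 0 ≤ u ^ (a - 1) := Real.rpow_nonneg hu.1 _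
    rw [falpha, abs_mul, abs_mul, abs_of_pos hlam, abs_of_nonneg h0]
    calc lam * u ^ (a - 1) * |mlf a a (-lam * u ^ a)| ≤ lam * u ^ (a - 1) * L := by gcongr
      _ ≤ _ := by nlinarith [mul_nonneg (mul_nonneg hlam.le hL.le) h0]
  refine ⟨2 * lam * L, by positivity, hbound, ?_, ?_⟩
  · intro u v hu huv hv1
    have hv : 0 < v := hu.trans_le huv
    have huI : u ∈ Icc (0:ℝ) 1 := ⟨hu.le, huv.trans hv1⟩
    have hvI : v ∈ Icc (0:ℝ) 1 := ⟨hv.le, hv1⟩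
    have hw : 0 ≤ (v - u) / v := div_nonneg (by linarith) hv.le
    -- `v^{a-1}` differs from `u^{a-1}` by at most a fraction `(v-u)/v` of the latter
    have e1 : |v ^ (a - 1) - u ^ (a - 1)| ≤ u ^ (a - 1) * ((v - u) / v) := by
      have h := rpow_sub_rpow_le hu huv (p := 1 - a) (by linarith)
      have hle : v ^ (a - 1) ≤ u ^ (a - 1) :=
        Real.rpow_le_rpow_of_nonpos hu huv (by linarith)
      rw [abs_of_nonpos (by linarith)]
      have e : ∀ w : ℝ, 0 < w → w ^ (1 - a) = (w ^ (a - 1))⁻¹ := fun w hw => by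
        rw [← Real.rpow_neg hw.le]; ring_nf
      rw [e v hv, e u hu] at h
      have hvp := Real.rpow_pos_of_pos hv (a - 1)
      have hup := Real.rpow_pos_of_pos hu (a - 1)
      have := mul_le_mul_of_nonneg_left h (mul_pos hvp hup).le
      have e2 : v ^ (a - 1) * u ^ (a - 1) * ((v ^ (a - 1))⁻¹ - (u ^ (a - 1))⁻¹)
        = u ^ (a - 1) - v ^ (a - 1) := by field_simp
      have e3 : v ^ (a - 1) * u ^ (a - 1) * ((v ^ (a - 1))⁻¹ * ((v - u) / v))
        = u ^ (a - 1) * ((v - u) / v) := by field_simp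
      linarith
    have e2 : |mlf a a (-lam * v ^ a) - mlf a a (-lam * u ^ a)| ≤ L * ((v - u) / v) := by
      refine (hlip _ (hpow v hvI) _ (hpow u huI)).trans ?_
      have h := rpow_sub_rpow_le hu huv ha1.le
      rw [abs_of_nonneg (sub_nonneg.2 (Real.rpow_le_rpow hu.le huv ha0.le))]
      have := (hpow v hvI).2
      gcongr
      exact h.trans (mul_le_of_le_one_left hw this)
    have h0 : 0 ≤ u ^ (a - 1) := Real.rpow_nonneg hu.le _
    have hsplit : falpha a lam v - falpha a lam u
        = lam * ((v ^ (a - 1) - u ^ (a - 1)) * mlf a a (-lam * v ^ a)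
          + u ^ (a - 1) * (mlf a a (-lam * v ^ a) - mlf a a (-lam * u ^ a))) := by
      simp only [falpha]; ring
    rw [hsplit, abs_mul, abs_of_pos hlam]
    calc _ ≤ lam * (u ^ (a - 1) * ((v - u) / v) * L + u ^ (a - 1) * (L * ((v - u) / v))) := by
          gcongr
          refine (abs_add_le _ _).trans ?_
          rw [abs_mul, abs_mul, abs_of_nonneg h0]
          gcongr
          exact hb _ (hpow v hvI)
      _ = _ := by ring
  · have hr : IntervalIntegrable (fun u : ℝ => 2 * lam * L * u ^ (a - 1)) volume 0 1 :=
      (intervalIntegral.intervalIntegrable_rpow' (by linarith)).const_mul _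
    have hmc : ContinuousOn (fun y => mlf a a (-lam * y)) (Icc 0 1) := by
      apply LipschitzOnWith.continuousOn (K := ⟨L, hL.le⟩)
      exact LipschitzOnWith.of_dist_le_mul fun y hy z hz => by
        rw [Real.dist_eq, Real.dist_eq]; exact hlip y hy z hz
    refine hr.mono_fun' ?_ ?_
    · rw [uIoc_of_le zero_le_one]
      refine ContinuousOn.aestronglyMeasurable ?_ measurableSet_Ioc
      unfold falpha
      refine (continuousOn_const.mul ?_).mul ?_
      · intro u hu
        exact (Real.continuousAt_rpow_const _ _ (Or.inl hu.1.ne')).continuousWithinAt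
      · exact hmc.comp (Real.continuous_rpow_const ha0.le).continuousOn
          fun u hu => hpow u (Ioc_subset_Icc_self hu)
    · rw [uIoc_of_le zero_le_one]
      filter_upwards [ae_restrict_mem measurableSet_Ioc] with u hu
      exact hbound u (Ioc_subset_Icc_self hu)

/-! ### Convolution gains regularity -/

/-- Smoothing by a kernel with singularity `u ^ (a - 1)` at the origin: it maps functions that are
`δ`-Hölder and vanish at `0` to `θ`-Hölder functions, for every `θ ≤ 1` with `θ < a + δ`. -/
lemma holderOn_conv {a δ θ C : ℝ} (ha : 0 < a) (hδ : 0 ≤ δ) (hθ : 0 < θ)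
    (hθ1 : θ ≤ 1) (hθa : θ < a + δ) {K g : ℝ → ℝ} (hC : 0 < C)
    (hK : ∀ u ∈ Icc (0:ℝ) 1, |K u| ≤ C * u ^ (a - 1))
    (hKd : ∀ u v, 0 < u → u ≤ v → v ≤ 1 → |K v - K u| ≤ C * (u ^ (a - 1) * ((v - u) / v)))
    (hKi : IntervalIntegrable K volume 0 1)
    (hg : HolderOn g δ (Icc 0 1)) (hg0 : g 0 = 0) (hgc : ContinuousOn g (Icc 0 1)) :
    HolderOn (fun t => ∫ s in (0:ℝ)..t, K (t - s) * g s) θ (Icc 0 1) := by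
  obtain ⟨G, hG, hGh⟩ := hg
  set D : ℝ := C * G * (1 / a + 1 / (a + δ - θ) + 1 / θ) with hD
  have hη : 0 < a + δ - θ := by linarith
  have hDpos : 0 < D := by positivity
  suffices h : ∀ x ∈ Icc (0:ℝ) 1, ∀ y ∈ Icc (0:ℝ) 1, x ≤ y →
      |(∫ s in (0:ℝ)..y, K (y - s) * g s) - ∫ s in (0:ℝ)..x, K (x - s) * g s|
        ≤ D * (y - x) ^ θ by
    refine ⟨D, hDpos, fun x hx y hy => ?_⟩
    rcases le_total x y with hxy | hxy
    · rw [abs_sub_comm, abs_sub_comm x y, abs_of_nonneg (sub_nonneg.2 hxy)]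
      exact h x hx y hy hxy
    · rw [abs_of_nonneg (sub_nonneg.2 hxy)]
      exact h y hy x hx hxy
  intro x hx y hy hxy
  have hh : 0 ≤ y - x := sub_nonneg.2 hxy
  have hh1 : y - x ≤ 1 := by linarith [hx.1, hy.2]
  have hKsub : ∀ p q, 0 ≤ p → p ≤ q → q ≤ 1 → IntervalIntegrable K volume p q := by
    intro p q hp hpq hq
    apply hKi.mono_set
    rw [uIcc_of_le hpq, uIcc_of_le zero_le_one]
    exact Icc_subset_Icc hp hq
  have hKrev : ∀ d p q, p ≤ q → q ≤ d → d - p ≤ 1 →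
      IntervalIntegrable (fun s => K (d - s)) volume p q := by
    intro d p q hpq hqd hd
    have := (hKsub (d - q) (d - p) (by linarith) (by linarith) hd).symm.comp_sub_left d
    simpa using this
  have hgsub : ∀ p q, 0 ≤ p → p ≤ q → q ≤ 1 → ContinuousOn g (uIcc p q) := by
    intro p q hp hpq hq
    rw [uIcc_of_le hpq]
    exact hgc.mono (Icc_subset_Icc hp hq)
  have iy0 := hKrev y 0 x hx.1 hxy (by linarith [hy.2])
  have iyx := hKrev y x y hxy le_rfl (by linarith)
  have ix := hKrev x 0 x hx.1 le_rfl (by linarith [hx.2])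
  have c0 := hgsub 0 x le_rfl hx.1 hx.2
  have cx := hgsub x y hx.1 hxy hy.2
  -- subtract the frozen value `g x`; what is left over is `g x` times a tail of the kernel
  have hdecomp : (∫ s in (0:ℝ)..y, K (y - s) * g s) - (∫ s in (0:ℝ)..x, K (x - s) * g s)
      = (∫ s in x..y, K (y - s) * (g s - g x))
        + (∫ s in (0:ℝ)..x, (K (y - s) - K (x - s)) * (g s - g x))
        + ∫ u in x..y, g x * K u := by
    have E1 : (∫ s in x..y, K (y - s) * (g s - g x))
        = (∫ s in x..y, K (y - s) * g s) - (∫ s in x..y, K (y - s)) * g x := by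
      rw [← intervalIntegral.integral_mul_const, ← intervalIntegral.integral_sub
        (iyx.mul_continuousOn cx) (iyx.mul_const _)]
      simp only [mul_sub]
    have E2 : (∫ s in (0:ℝ)..x, (K (y - s) - K (x - s)) * (g s - g x))
        = ((∫ s in (0:ℝ)..x, K (y - s) * g s) - ∫ s in (0:ℝ)..x, K (x - s) * g s)
          - ((∫ s in (0:ℝ)..x, K (y - s)) - ∫ s in (0:ℝ)..x, K (x - s)) * g x := by
      rw [← intervalIntegral.integral_sub iy0 ix, ← intervalIntegral.integral_mul_const,
        ← intervalIntegral.integral_sub (iy0.mul_continuousOn c0) (ix.mul_continuousOn c0),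
        ← intervalIntegral.integral_sub
          ((iy0.mul_continuousOn c0).sub (ix.mul_continuousOn c0))
          ((iy0.sub ix).mul_const _)]
      congr 1; ext s; ring
    have E3 : (∫ s in (0:ℝ)..y, K (y - s) * g s)
        = (∫ s in (0:ℝ)..x, K (y - s) * g s) + ∫ s in x..y, K (y - s) * g s :=
      (intervalIntegral.integral_add_adjacent_intervals (iy0.mul_continuousOn c0)
        (iyx.mul_continuousOn cx)).symm
    have E4 : (∫ s in (0:ℝ)..x, K (y - s)) + ∫ s in x..y, K (y - s)
        = (∫ s in (0:ℝ)..x, K (x - s)) + ∫ u in x..y, K u := by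
      rw [intervalIntegral.integral_add_adjacent_intervals iy0 iyx,
        intervalIntegral.integral_comp_sub_left, intervalIntegral.integral_comp_sub_left,
        sub_self, sub_self, sub_zero, sub_zero, intervalIntegral.integral_add_adjacent_intervals
        (hKsub 0 x le_rfl hx.1 hx.2) (hKsub x y hx.1 hxy hy.2)]
    rw [E1, E2, E3, intervalIntegral.integral_const_mul]
    linear_combination g x * E4
  -- the part of the integral over `[x,y]`
  have B1 : |∫ s in x..y, K (y - s) * (g s - g x)| ≤ C * G * (1 / a) * (y - x) ^ θ := by
    have hi : IntervalIntegrable (fun s => C * G * (y - x) ^ δ * (y - s) ^ (a - 1)) volume x y := by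
      have := ((intervalIntegral.intervalIntegrable_rpow' (a := y - x) (b := 0) (r := a - 1)
        (by linarith)).comp_sub_left y).const_mul (C * G * (y - x) ^ δ)
      simpa using this
    have h1 := intervalIntegral.norm_integral_le_of_norm_le hxy
      (f := fun s => K (y - s) * (g s - g x)) (Eventually.of_forall ?_) hi
    · rw [Real.norm_eq_abs] at h1
      refine h1.trans ?_
      rw [intervalIntegral.integral_const_mul,
        intervalIntegral.integral_comp_sub_left (fun u : ℝ => u ^ (a - 1)), sub_self,
        integral_rpow (Or.inl (by linarith)), sub_add_cancel, Real.zero_rpow ha.ne', sub_zero]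
      have : (y - x) ^ δ * (y - x) ^ a ≤ (y - x) ^ θ := by
        rw [← Real.rpow_add_of_nonneg hh hδ ha.le]
        exact Real.rpow_le_rpow_of_exponent_ge_of_imp hh hh1 (by linarith)
          (fun _ h => absurd h (by linarith))
      calc _ = C * G * (1 / a) * ((y - x) ^ δ * (y - x) ^ a) := by ring
        _ ≤ _ := by gcongr
    · intro s hs
      have k1 := hK (y - s) ⟨by linarith [hs.2], by linarith [hs.1, hx.1, hy.2]⟩
      have g1 := hGh s ⟨by linarith [hs.1, hx.1], hs.2.trans hy.2⟩ x hx
      rw [abs_of_nonneg (by linarith [hs.1] : 0 ≤ s - x)] at g1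
      have g2 : (s - x) ^ δ ≤ (y - x) ^ δ :=
        Real.rpow_le_rpow (by linarith [hs.1]) (by linarith [hs.2]) hδ
      have := Real.rpow_nonneg (by linarith [hs.2] : 0 ≤ y - s) (a - 1)
      rw [Real.norm_eq_abs, abs_mul]
      calc |K (y - s)| * |g s - g x| ≤ (C * (y - s) ^ (a - 1)) * (G * (y - x) ^ δ) := by
            apply mul_le_mul k1 (g1.trans (by gcongr)) (abs_nonneg _) (by positivity)
        _ = _ := by ring
  -- the increment of the kernel over `[0,x]`
  have B2 : |∫ s in (0:ℝ)..x, (K (y - s) - K (x - s)) * (g s - g x)|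
      ≤ C * G * (1 / (a + δ - θ)) * (y - x) ^ θ := by
    have hi : IntervalIntegrable
        (fun s => C * G * (y - x) ^ θ * (x - s) ^ (a + δ - θ - 1)) volume 0 x := by
      have := ((intervalIntegral.intervalIntegrable_rpow' (a := x) (b := 0) (r := a + δ - θ - 1)
        (by linarith)).comp_sub_left x).const_mul (C * G * (y - x) ^ θ)
      simpa using this
    have h1 := intervalIntegral.norm_integral_le_of_norm_le hx.1
      (f := fun s => (K (y - s) - K (x - s)) * (g s - g x)) (Eventually.of_forall ?_) hi
    · rw [Real.norm_eq_abs] at h1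
      refine h1.trans ?_
      rw [intervalIntegral.integral_const_mul,
        intervalIntegral.integral_comp_sub_left (fun u : ℝ => u ^ (a + δ - θ - 1)), sub_self,
        integral_rpow (Or.inl (by linarith)), sub_add_cancel, Real.zero_rpow hη.ne', sub_zero,
        sub_zero]
      have : x ^ (a + δ - θ) ≤ 1 := Real.rpow_le_one hx.1 hx.2 hη.le
      calc _ = C * G * (y - x) ^ θ * (1 / (a + δ - θ)) * x ^ (a + δ - θ) := by ring
        _ ≤ C * G * (y - x) ^ θ * (1 / (a + δ - θ)) * 1 := by gcongr
        _ = _ := by ring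
    · intro s hs
      rw [Real.norm_eq_abs, abs_mul]
      rcases eq_or_lt_of_le hs.2 with rfl | hsx
      · rw [sub_self (g s), abs_zero, mul_zero]
        have := Real.rpow_nonneg (sub_self s).ge (a + δ - θ - 1)
        positivity
      have hu : 0 < x - s := by linarith
      have hv : 0 < y - s := by linarith
      have k1 := hKd (x - s) (y - s) hu (by linarith) (by linarith [hs.1, hy.2])
      rw [show y - s - (x - s) = y - x by ring] at k1
      have g1 := hGh s ⟨hs.1.le, hs.2.trans hx.2⟩ x hx
      rw [abs_sub_comm s x, abs_of_pos hu] at g1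
      -- interpolation: `h / v ≤ (h / v) ^ θ ≤ h ^ θ u ^ (-θ)` for `h = y - x ≤ v`, `u ≤ v`
      have w : (y - x) / (y - s) ≤ (y - x) ^ θ * (x - s) ^ (-θ) := by
        calc (y - x) / (y - s) ≤ ((y - x) / (y - s)) ^ θ :=
              Real.self_le_rpow_of_le_one (by positivity)
                ((div_le_one hv).2 (by linarith)) hθ1
          _ ≤ ((y - x) / (x - s)) ^ θ := by gcongr
          _ = _ := by rw [Real.div_rpow hh hu.le, Real.rpow_neg hu.le, div_eq_mul_inv]
      calc _ ≤ (C * ((x - s) ^ (a - 1) * ((y - x) ^ θ * (x - s) ^ (-θ)))) *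
            (G * (x - s) ^ δ) := by
            refine mul_le_mul (k1.trans ?_) g1 (abs_nonneg _) (by positivity)
            gcongr
        _ = C * G * (y - x) ^ θ * ((x - s) ^ (a - 1) * (x - s) ^ (-θ) * (x - s) ^ δ) := by ring
        _ = _ := by
            rw [← Real.rpow_add hu, ← Real.rpow_add hu]
            ring_nf
  -- the tail of the kernel, multiplied by `|g x| ≤ G x ^ δ`
  have B3 : |∫ u in x..y, g x * K u| ≤ C * G * (1 / θ) * (y - x) ^ θ := by
    have hi : IntervalIntegrable (fun u : ℝ => C * G * u ^ (θ - 1)) volume x y :=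
      (intervalIntegral.intervalIntegrable_rpow' (by linarith)).const_mul _
    have h1 := intervalIntegral.norm_integral_le_of_norm_le hxy
      (f := fun u => g x * K u) (Eventually.of_forall ?_) hi
    · rw [Real.norm_eq_abs] at h1
      refine h1.trans ?_
      rw [intervalIntegral.integral_const_mul, integral_rpow (Or.inl (by linarith)),
        sub_add_cancel]
      have := Real.rpow_add_le_add_rpow hx.1 hh hθ.le hθ1
      rw [add_sub_cancel] at this
      calc C * G * ((y ^ θ - x ^ θ) / θ) ≤ C * G * ((y - x) ^ θ / θ) := by gcongr; linarith
        _ = _ := by ring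
    · intro u hu
      have hu0 : 0 < u := hx.1.trans_lt hu.1
      have hu1 : u ≤ 1 := hu.2.trans hy.2
      have k1 := hK u ⟨hu0.le, hu1⟩
      have g1 := hGh x hx 0 ⟨le_rfl, zero_le_one⟩
      rw [hg0, sub_zero, sub_zero, abs_of_nonneg hx.1] at g1
      have g2 : x ^ δ ≤ u ^ δ := Real.rpow_le_rpow hx.1 hu.1.le hδ
      rw [Real.norm_eq_abs, abs_mul]
      calc |g x| * |K u| ≤ (G * u ^ δ) * (C * u ^ (a - 1)) := by
            refine mul_le_mul (g1.trans ?_) k1 (abs_nonneg _) (by positivity)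
            gcongr
        _ = C * G * u ^ (δ + (a - 1)) := by rw [Real.rpow_add hu0]; ring
        _ ≤ _ := by
            gcongr ?_ * ?_
            exact Real.rpow_le_rpow_of_exponent_ge hu0 hu1 (by linarith)
  rw [hdecomp]
  calc _ ≤ _ := abs_add_three _ _ _
    _ ≤ C * G * (1 / a) * (y - x) ^ θ + C * G * (1 / (a + δ - θ)) * (y - x) ^ θ
        + C * G * (1 / θ) * (y - x) ^ θ := by gcongr
    _ = _ := by rw [hD]; ring

/-! ### Operations on Hölder functions -/

lemma HolderOn.mono_exponent {f : ℝ → ℝ} {γ γ' : ℝ} (h : HolderOn f γ (Icc 0 1))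
    (hle : γ' ≤ γ) : HolderOn f γ' (Icc 0 1) := by
  obtain ⟨C, hC, hf⟩ := h
  refine ⟨C, hC, fun x hx y hy => ?_⟩
  rcases eq_or_ne x y with rfl | hne
  · simp only [sub_self, abs_zero]
    have := Real.rpow_nonneg (le_refl (0:ℝ)) γ'
    positivity
  · refine (hf x hx y hy).trans ?_
    gcongr ?_ * ?_
    refine Real.rpow_le_rpow_of_exponent_ge (abs_pos.2 (sub_ne_zero.2 hne)) ?_ hle
    rw [abs_le]
    constructor <;> linarith [hx.1, hx.2, hy.1, hy.2]

/-- For a nonnegative exponent Hölder maps compose; the exponents multiply. -/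
lemma HolderOn.comp {f g : ℝ → ℝ} {γ δ : ℝ} {S T : Set ℝ} (hg : HolderOn g δ T)
    (hf : HolderOn f γ S) (hmaps : MapsTo f S T) (hδ : 0 ≤ δ) :
    HolderOn (fun x => g (f x)) (γ * δ) S := by
  obtain ⟨C, hC, hf⟩ := hf
  obtain ⟨D, hD, hg⟩ := hg
  refine ⟨D * C ^ δ, by positivity, fun x hx y hy => ?_⟩
  calc |g (f x) - g (f y)| ≤ D * |f x - f y| ^ δ := hg _ (hmaps hx) _ (hmaps hy)
    _ ≤ D * (C * |x - y| ^ γ) ^ δ := by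
        have := hf x hx y hy
        gcongr
    _ = _ := by
        rw [Real.mul_rpow hC.le (by positivity), ← Real.rpow_mul (abs_nonneg _)]; ring

lemma HolderOn.continuousOn {f : ℝ → ℝ} {γ : ℝ} {S : Set ℝ} (hf : HolderOn f γ S) (hγ : 0 < γ) :
    ContinuousOn f S := by
  obtain ⟨C, hC, hf⟩ := hf
  intro x hx
  have hlim : Tendsto (fun y => C * |y - x| ^ γ) (nhdsWithin x S) (nhds 0) := by
    have : Continuous fun y : ℝ => C * |y - x| ^ γ :=
      continuous_const.mul ((Real.continuous_rpow_const hγ.le).comp (by fun_prop))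
    simpa [Real.zero_rpow hγ.ne'] using (this.tendsto x).mono_left nhdsWithin_le_nhds
  refine tendsto_iff_dist_tendsto_zero.2 (squeeze_zero' (Eventually.of_forall fun _ => dist_nonneg)
    ?_ hlim)
  filter_upwards [self_mem_nhdsWithin] with y hy
  rw [Real.dist_eq]
  exact hf y hy x hx

/-! ### Bootstrapping the Volterra equation -/

/-- if `B(0)=0` and `B` has Hölder regularity `1/2 - ε` on every `[0,R]`,
and `X` is continuous, nondecreasing, vanishing at `0` and satisfies
`X_t = ∫_0^t s f^{α,λ}(t-s) ds + c ∫_0^t f^{α,λ}(t-s) B(X_s) ds` on `[0,1]`, then for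
every `ε > 0`, `X` has Hölder regularity `(1 ∧ 2α) - ε` on `[0,1]`. -/
theorem holder_regularity_X (α lam c : ℝ) (hα : α ∈ Set.Ioo (0:ℝ) 1) (hlam : 0 < lam)
    (hc : 0 ≤ c)
    (B : ℝ → ℝ) (hB0 : B 0 = 0)
    (hBhold : ∀ ε > (0:ℝ), ∀ R > (0:ℝ), HolderOn B (1 / 2 - ε) (Set.Icc 0 R))
    (X : ℝ → ℝ) (hXcont : ContinuousOn X (Set.Icc 0 1))
    (hXmono : MonotoneOn X (Set.Icc 0 1)) (hX0 : X 0 = 0)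
    (hX : ∀ t ∈ Set.Icc (0:ℝ) 1,
      X t = (∫ s in (0:ℝ)..t, s * falpha α lam (t - s))
            + c * ∫ s in (0:ℝ)..t, falpha α lam (t - s) * B (X s)) :
    ∀ ε > 0, HolderOn X (min 1 (2 * α) - ε) (Set.Icc 0 1) := by
  obtain ⟨C, hC, hK, hKd, hKi⟩ := falpha_bounds hα hlam
  have hα0 : 0 < α := hα.1
  have h01 : (0:ℝ) ∈ Icc (0:ℝ) 1 := ⟨le_rfl, zero_le_one⟩
  have h11 : (1:ℝ) ∈ Icc (0:ℝ) 1 := ⟨zero_le_one, le_rfl⟩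
  have hX1 : 0 ≤ X 1 := hX0 ▸ hXmono h01 h11 zero_le_one
  have hmaps : MapsTo X (Icc 0 1) (Icc 0 (X 1 + 1)) := fun t ht =>
    ⟨hX0 ▸ hXmono h01 ht ht.1, (hXmono ht h11 ht.2).trans (by linarith)⟩
  have hBXc : ContinuousOn (fun s => B (X s)) (Icc 0 1) :=
    ((hBhold (1 / 4) (by norm_num) (X 1 + 1) (by linarith)).continuousOn (by norm_num)).comp
      hXcont hmaps
  -- one round of bootstrapping: exponent `γ` is improved to anything below `α + γ / 2`
  have step : ∀ γ θ, 0 ≤ γ → γ ≤ 1 → 0 < θ → θ ≤ 1 → θ < α + γ / 2 →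
      HolderOn X γ (Icc 0 1) → HolderOn X θ (Icc 0 1) := by
    intro γ θ hγ hγ1 hθ hθ1 hlt hXγ
    set e : ℝ := min (1 / 2) ((α + γ / 2 - θ) / 2) with he
    have he0 : 0 < e := lt_min (by norm_num) (by linarith)
    have he1 : e ≤ 1 / 2 := min_le_left _ _
    have he2 : e ≤ (α + γ / 2 - θ) / 2 := min_le_right _ _
    have hBX : HolderOn (fun s => B (X s)) (γ * (1 / 2 - e)) (Icc 0 1) :=
      (hBhold e he0 (X 1 + 1) (by linarith)).comp hXγ hmaps (by linarith)
    obtain ⟨M₂, hM₂, h2⟩ := holderOn_conv hα0 (mul_nonneg hγ (by linarith)) hθ hθ1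
      (by nlinarith) hC hK hKd hKi hBX (by rw [hX0, hB0]) hBXc
    have hid : HolderOn (fun s : ℝ => s) 1 (Icc 0 1) :=
      ⟨1, one_pos, fun x _ y _ => by simp⟩
    obtain ⟨M₁, hM₁, h1⟩ := holderOn_conv hα0 zero_le_one hθ hθ1
      (by linarith) hC hK hKd hKi hid rfl continuousOn_id
    refine ⟨M₁ + c * M₂, by positivity, fun x hx y hy => ?_⟩
    have h1 := h1 x hx y hy
    have h2 := h2 x hx y hy
    rw [hX x hx, hX y hy]
    simp only [mul_comm _ (falpha α lam _)]
    rw [add_sub_add_comm, ← mul_sub]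
    refine (abs_add_le _ _).trans ?_
    rw [abs_mul, abs_of_nonneg hc, add_mul, mul_assoc]
    gcongr
  have base : HolderOn X 0 (Icc 0 1) := by
    refine ⟨X 1 + 1, by linarith, fun x hx y hy => ?_⟩
    rw [Real.rpow_zero, mul_one, abs_le]
    constructor <;> linarith [(hmaps hx).1, (hmaps hx).2, (hmaps hy).1, (hmaps hy).2]
  have main : ∀ θ, 0 < θ → θ < min 1 (2 * α) → HolderOn X θ (Icc 0 1) := by
    intro θ hθ hlt
    have hθ1 : θ < 1 := hlt.trans_le (min_le_left _ _)
    have hθ2 : θ < 2 * α := hlt.trans_le (min_le_right _ _)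
    have hp : ∀ n : ℕ, 0 < (1 / 2 : ℝ) ^ n ∧ (1 / 2 : ℝ) ^ n ≤ 1 := fun n =>
      ⟨by positivity, pow_le_one₀ (by norm_num) (by norm_num)⟩
    -- the exponents `θ (1 - 2⁻ⁿ)` are the orbit of `0` under `γ ↦ (θ + γ) / 2`
    have iter : ∀ n : ℕ, HolderOn X (θ * (1 - (1 / 2) ^ n)) (Icc 0 1) := by
      intro n
      induction n with
      | zero => simpa using base
      | succ n ih =>
        obtain ⟨h1, h2⟩ := hp n
        have h3 : (1 / 2 : ℝ) ^ (n + 1) = (1 / 2) ^ n / 2 := by ring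
        refine step _ _ (mul_nonneg hθ.le (by linarith)) ?_ (mul_pos hθ (by linarith)) ?_ ?_ ih
        · nlinarith
        · nlinarith
        · rw [h3]; linarith
    obtain ⟨n, hn⟩ := exists_pow_lt_of_lt_one (show 0 < (2 * α - θ) / θ from
      div_pos (by linarith) hθ) (show (1 / 2 : ℝ) < 1 by norm_num)
    rw [lt_div_iff₀ hθ] at hn
    obtain ⟨h1, h2⟩ := hp n
    refine step _ θ (mul_nonneg hθ.le (by linarith)) ?_ hθ hθ1.le ?_ (iter n)
    · nlinarith
    · linarith
  intro ε hε
  have hm : 0 < min 1 (2 * α) := lt_min one_pos (by linarith)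
  -- the target exponent may be nonpositive, hence the maximum with a positive one
  refine (main (max (min 1 (2 * α) - ε) (min 1 (2 * α) / 2)) ?_ ?_).mono_exponent (le_max_left _ _)
  · exact lt_max_of_lt_right (by linarith)
  · exact max_lt (by linarith) (by linarith)
end

section
/- Let α ∈ (1/2, 1), λ > 0, c ≥ 0, and let ν ∈ (1/2, α). Let Z : [0,1] → ℝ be continuous with Z(0) = 0 such that for every γ < 1/2, Z has Hölder regularity γ on [0,1]. Let X : [0,1] → ℝ satisfy X_t = ∫_0^t s f^{α,λ}(t−s) ds + c ∫_0^t f^{α,λ}(t−s) Z_s ds for all t ∈ [0,1]. Then X is differentiable on [0,1], its derivative equals Y_t = F^{α,λ}(t) + c ∫_0^t D^ν f^{α,λ}(t−u) D^{1−ν} Z_u du, and for every ε > 0, Y has Hölder regularity α − 1/2 − ε on [0,1]. -/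
open MeasureTheory Filter Set

/-! The argument takes place in the class `SingKer` of weakly singular kernels of order `m`, those
with `|k(r)| ≤ K r^{m-1}` and `|k'(r)| ≤ K r^{m-2}` near `0`.

* If `φ` is `γ`-Hölder, vanishes on `(-∞, 0]`, and `γ + m > 1`, then `k * φ` is differentiable: its
  derivative is `(φ(T) - φ(T-1)) k(1) - ∫_0^1 (φ(T) - φ(T-r)) k'(r) dr`, called `convDeriv k φ`,
  in which the increment of `φ` makes the singularity `r^{m-2}` of `k'` integrable
  (`hasDerivAt_unitConv_convDeriv`). Bounding the second difference of `φ` by both `r^γ` and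
  `|x-y|^γ` and interpolating, `convDeriv k φ` is Hölder of every order below `γ + m - 1`
  (`convDeriv_holder`).
* The kernel `f = f^{α,λ}` has order `α` (`falpha_singKer`), because the Mittag-Leffler function is
  entire: the ratio of consecutive coefficients is `Γ(x) / Γ(x+α) = O(x^{-α})`
  (`gamma_ratio_le`). The kernel `t^{ν-1}` has order `ν`.
* With `Z` extended to `φ` on the line, `X` is a double primitive of `f` plus `c (f * φ)`. As `Z` is
  `γ`-Hölder for all `γ < 1/2` and `α > 1/2`, this is differentiable with derivative
  `F + c convDeriv f φ`; `F` is `α`-Hölder, and `convDeriv f φ` is Hölder of every order below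
  `α - 1/2`.
* It remains to identify `convDeriv f φ` with `D^ν f * D^{1-ν} Z` (`cv_deriv_rlKer`,
  `integral_fracDeriv_mul`). By associativity of the convolution and the Beta integral
  `t^{-ν} * t^{ν-1} = Γ(1-ν) Γ(ν)`, one has
  `(f * t^{-ν}) * (t^{ν-1} * φ) = Γ(1-ν) Γ(ν) (f * ψ)` with `ψ` the primitive of `φ`.
  Differentiating twice, once in each factor on the left (where `f * t^{-ν}` vanishes at `0`), gives
  the identity; this is where `ν > 1/2` and `ν < α` enter. -/

/-! ### One-sided convolution -/

/-- The one-sided convolution `∫_0^x a(t) b(x-t) dt` of two functions on `[0, ∞)`. -/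
noncomputable def cv (a b : ℝ → ℝ) (x : ℝ) : ℝ := ∫ t in (0:ℝ)..x, a t * b (x - t)

/-- The convolution of a kernel restricted to `[0,1]` with a function `P` on all of `ℝ`. It agrees
with `cv w P` on `[0,1]` when `P` vanishes on `(-∞, 0]`, but its domain of integration does not
depend on `T`, so that it can be differentiated under the integral sign. -/
noncomputable def unitConv (w P : ℝ → ℝ) (T : ℝ) : ℝ := ∫ r in (0:ℝ)..1, w r * P (T - r)

/-- The one-sided convolution as a convolution over the whole line of functions cut off to
`(0, T]`, the form to which Fubini applies. -/
theorem cv_eq_indicator {a b : ℝ → ℝ} {x T : ℝ} (hx0 : 0 ≤ x) (hxT : x ≤ T) :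
    cv a b x = ∫ t, (Ioc 0 T).indicator a t * (Ioc 0 T).indicator b (x - t) := by
  rw [cv, intervalIntegral.integral_of_le hx0, integral_Ioc_eq_integral_Ioo,
    ← integral_indicator measurableSet_Ioo]
  congr 1
  ext t
  by_cases ht : t ∈ Ioo 0 x
  · have h1 : t ∈ Ioc 0 T := ⟨ht.1, by linarith [ht.2]⟩
    have h2 : x - t ∈ Ioc 0 T := ⟨by linarith [ht.2], by linarith [ht.1]⟩
    simp only [indicator_of_mem, ht, h1, h2]
  · rw [indicator_of_notMem ht]
    by_cases h1 : t ∈ Ioc 0 T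
    · have h2 : x - t ∉ Ioc 0 T := fun h => ht ⟨h1.1, by linarith [h.1]⟩
      rw [indicator_of_notMem h2, mul_zero]
    · rw [indicator_of_notMem h1, zero_mul]

theorem unitConv_eq_cv {w P : ℝ → ℝ} (hP : ∀ x ≤ 0, P x = 0) {T : ℝ} (hT : T ∈ Icc (0:ℝ) 1) :
    unitConv w P T = cv w P T := by
  rw [unitConv, cv, intervalIntegral.integral_of_le hT.1,
    intervalIntegral.integral_of_le zero_le_one]
  refine setIntegral_eq_of_subset_of_forall_sdiff_eq_zero measurableSet_Ioc
    (Ioc_subset_Ioc_right hT.2) fun r hr => ?_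
  have : T < r := by
    by_contra h
    exact hr.2 ⟨hr.1.1, not_lt.1 h⟩
  rw [hP _ (by linarith), mul_zero]

theorem cv_comm (a b : ℝ → ℝ) (x : ℝ) : cv a b x = cv b a x := by
  rw [cv, cv]
  have := intervalIntegral.integral_comp_sub_left (a := 0) (b := x)
    (fun t => a (x - t) * b t) x
  simp only [sub_sub_cancel, sub_self, sub_zero] at this
  rw [this]
  simp only [mul_comm]

/-- Associativity of the one-sided convolution, by Fubini. -/
theorem cv_assoc {a b c : ℝ → ℝ} {T : ℝ} (hT : 0 ≤ T) (ha : IntegrableOn a (Ioc 0 T))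
    (hb : IntegrableOn b (Ioc 0 T)) (hc : Continuous c) :
    cv (cv a b) c T = cv a (cv b c) T := by
  set a0 := (Ioc 0 T).indicator a with ha0
  set b0 := (Ioc 0 T).indicator b with hb0
  set c0 := (Ioc 0 T).indicator c with hc0
  have ia : Integrable a0 := (integrable_indicator_iff measurableSet_Ioc).2 ha
  have ib : Integrable b0 := (integrable_indicator_iff measurableSet_Ioc).2 hb
  have mc : Measurable c0 := hc.measurable.indicator measurableSet_Ioc
  obtain ⟨B, hB⟩ := isCompact_Icc.exists_bound_of_continuousOn (s := Icc 0 T) hc.continuousOn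
  have bc : ∀ x, ‖c0 x‖ ≤ max B 0 := by
    intro x
    by_cases hx : x ∈ Ioc 0 T
    · rw [hc0, indicator_of_mem hx]
      exact (hB x ⟨hx.1.le, hx.2⟩).trans (le_max_left _ _)
    · rw [hc0, indicator_of_notMem hx, norm_zero]
      exact le_max_right _ _
  have hint : Integrable (fun p : ℝ × ℝ => a0 p.2 * b0 (p.1 - p.2) * c0 (T - p.1))
      (volume.prod volume) := by
    have h1 : Integrable (fun p : ℝ × ℝ => a0 p.2 * b0 (p.1 - p.2)) (volume.prod volume) := by
      simpa using ia.convolution_integrand (ContinuousLinearMap.mul ℝ ℝ) ib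
    exact h1.mul_bdd (c := max B 0)
      (mc.comp (measurable_const.sub measurable_fst)).aestronglyMeasurable
      (Eventually.of_forall fun p => bc _)
  have hswap := integral_integral_swap
    (f := fun r t : ℝ => a0 t * b0 (r - t) * c0 (T - r)) hint
  rw [cv_eq_indicator hT le_rfl, cv_eq_indicator hT le_rfl]
  calc _ = ∫ r, ∫ t, a0 t * b0 (r - t) * c0 (T - r) := by
        congr 1
        ext r
        rw [integral_mul_const]
        by_cases hr : r ∈ Icc 0 T
        · rw [← cv_eq_indicator hr.1 hr.2]
          by_cases hr0 : r = 0
          · subst hr0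
            simp [cv]
          · rw [indicator_of_mem (show r ∈ Ioc 0 T from ⟨lt_of_le_of_ne hr.1 (Ne.symm hr0), hr.2⟩)]
        · have h1 : r ∉ Ioc 0 T := fun h => hr ⟨h.1.le, h.2⟩
          have h2 : T - r ∉ Ioc 0 T := fun h => hr ⟨by linarith [h.2], by linarith [h.1]⟩
          rw [indicator_of_notMem h1, hc0, indicator_of_notMem h2, zero_mul, mul_zero]
    _ = ∫ t, ∫ r, a0 t * b0 (r - t) * c0 (T - r) := hswap
    _ = _ := by
        congr 1
        ext t
        simp only [mul_assoc]
        rw [integral_const_mul]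
        by_cases ht : t ∈ Ioc 0 T
        · congr 1
          have h1 : ∫ r, b0 (r - t) * c0 (T - r) = ∫ q, b0 q * c0 (T - t - q) := by
            rw [← integral_sub_right_eq_self (fun q => b0 q * c0 (T - t - q)) t]
            congr 1
            ext r
            congr 2
            ring
          rw [h1, ← cv_eq_indicator (by linarith [ht.2]) (by linarith [ht.1])]
          by_cases h0 : t = T
          · subst h0
            simp [cv]
          · have : T - t ∈ Ioc 0 T :=
              ⟨by linarith [lt_of_le_of_ne ht.2 h0], by linarith [ht.1]⟩
            rw [indicator_of_mem this]
        · rw [ha0, indicator_of_notMem ht, zero_mul, zero_mul]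

/-- Differentiation of `unitConv` falls on the smooth factor. -/
theorem hasDerivAt_unitConv {w P p : ℝ → ℝ} {B : ℝ} (hw : IntegrableOn w (Ioc 0 1))
    (hP : ∀ x, HasDerivAt P (p x) x) (hB : ∀ x, |p x| ≤ B) (T : ℝ) :
    HasDerivAt (unitConv w P) (unitConv w p T) T := by
  have hPc : Continuous P := continuous_iff_continuousAt.2 fun x => (hP x).continuousAt
  have hpm : Measurable p := by
    rw [show p = deriv P from funext fun x => (hP x).deriv.symm]
    exact measurable_deriv P
  have hu : uIoc (0:ℝ) 1 = Ioc 0 1 := uIoc_of_le zero_le_one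
  have hm : ∀ x, AEStronglyMeasurable (fun r => w r * P (x - r)) (volume.restrict (Ioc 0 1)) :=
    fun x => hw.aestronglyMeasurable.mul
      (hPc.comp (continuous_const.sub continuous_id)).aestronglyMeasurable
  refine (intervalIntegral.hasDerivAt_integral_of_dominated_loc_of_deriv_le
    (F := fun x r => w r * P (x - r)) (F' := fun x r => w r * p (x - r))
    (bound := fun r => |w r| * B) (s := univ) univ_mem ?_ ?_ ?_ ?_ ?_ ?_).2
  · rw [hu]
    exact Eventually.of_forall hm
  · rw [intervalIntegrable_iff_integrableOn_Ioc_of_le zero_le_one]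
    obtain ⟨M, hM⟩ := isCompact_Icc.exists_bound_of_continuousOn (s := Icc (0:ℝ) 1)
      (hPc.comp (continuous_const.sub continuous_id) : Continuous fun r => P (T - r)).continuousOn
    refine Integrable.mul_bdd (c := M) hw
      (hPc.comp (continuous_const.sub continuous_id)).aestronglyMeasurable ?_
    exact (ae_restrict_iff' measurableSet_Ioc).2
      (Eventually.of_forall fun r hr => hM r ⟨hr.1.le, hr.2⟩)
  · rw [hu]
    exact hw.aestronglyMeasurable.mul
      (hpm.comp (measurable_const.sub measurable_id)).aestronglyMeasurable
  · refine Eventually.of_forall fun r _ x _ => ?_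
    rw [norm_mul]
    exact mul_le_mul_of_nonneg_left (hB _) (abs_nonneg _)
  · rw [intervalIntegrable_iff_integrableOn_Ioc_of_le zero_le_one]
    exact hw.abs.mul_const B
  · refine Eventually.of_forall fun r _ x _ => ?_
    have := (hP (x - r)).comp x ((hasDerivAt_id x).sub_const r)
    simpa using this.const_mul (w r)

/-! ### Convolution of a singular kernel with a Hölder function -/

/-- `k` is a weakly singular kernel of order `m`, with constant `K`: on `(0,2)` it is
differentiable, `|k(r)| ≤ K r^{m-1}` and `|k'(r)| ≤ K r^{m-2}`. The interval reaches beyond `1` so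
that two-sided derivatives are available on all of `(0,1]`. -/
def SingKer (k : ℝ → ℝ) (m K : ℝ) : Prop :=
  ∀ r, 0 < r → r < 2 →
    DifferentiableAt ℝ k r ∧ |k r| ≤ K * r ^ (m - 1) ∧ |deriv k r| ≤ K * r ^ (m - 2)

theorem integrableOn_rpow {p : ℝ} (hp : -1 < p) (T : ℝ) (hT : 0 ≤ T) :
    IntegrableOn (fun r : ℝ => r ^ p) (Ioc 0 T) := by
  rw [← intervalIntegrable_iff_integrableOn_Ioc_of_le hT]
  exact intervalIntegral.intervalIntegrable_rpow' hp

theorem SingKer.aesm {k : ℝ → ℝ} {m K : ℝ} (hk : SingKer k m K) :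
    AEStronglyMeasurable k (volume.restrict (Ioc 0 1)) := by
  refine ContinuousOn.aestronglyMeasurable (fun r hr => ?_) measurableSet_Ioc
  exact (hk r hr.1 (by linarith [hr.2])).1.continuousAt.continuousWithinAt

theorem SingKer.integrableOn {k : ℝ → ℝ} {m K : ℝ} (hk : SingKer k m K) (hm : 0 < m) :
    IntegrableOn k (Ioc 0 1) := by
  refine Integrable.mono' ((integrableOn_rpow (p := m - 1) (by linarith) 1 zero_le_one).const_mul K)
    hk.aesm ?_
  exact (ae_restrict_iff' measurableSet_Ioc).2
    (Eventually.of_forall fun r hr => (hk r hr.1 (by linarith [hr.2])).2.1)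

/-- The derivative of `unitConv k φ`, written so that the non-integrable singularity of `k'` at `0`
is compensated by the increment of `φ`. -/
noncomputable def convDeriv (k φ : ℝ → ℝ) (T : ℝ) : ℝ :=
  (φ T - φ (T - 1)) * k 1 - ∫ r in (0:ℝ)..1, (φ T - φ (T - r)) * deriv k r

theorem continuous_of_holder {φ : ℝ → ℝ} {C γ : ℝ} (hγ : 0 < γ)
    (hφ : ∀ x y, |φ x - φ y| ≤ C * |x - y| ^ γ) : Continuous φ := by
  refine continuous_iff_continuousAt.2 fun x => ?_
  rw [ContinuousAt, tendsto_iff_dist_tendsto_zero]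
  have h : Tendsto (fun y : ℝ => C * |y - x| ^ γ) (nhds x) (nhds 0) := by
    have : Continuous fun y : ℝ => C * |y - x| ^ γ :=
      continuous_const.mul ((continuous_abs.comp (continuous_id.sub continuous_const)).rpow_const
        fun _ => Or.inr hγ.le)
    simpa [hγ.ne'] using this.tendsto x
  exact squeeze_zero (fun _ => dist_nonneg) (fun y => hφ y x) h

section
variable {k φ : ℝ → ℝ} {m K C γ : ℝ}

theorem incr_bound (hk : SingKer k m K) (hφ : ∀ x y, |φ x - φ y| ≤ C * |x - y| ^ γ)
    (T : ℝ) {r : ℝ} (hr : r ∈ Ioc (0:ℝ) 1) :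
    |(φ T - φ (T - r)) * deriv k r| ≤ C * K * r ^ (γ + m - 2) := by
  have h1 := hφ T (T - r)
  rw [sub_sub_cancel, abs_of_pos hr.1] at h1
  have h2 := (hk r hr.1 (by linarith [hr.2])).2.2
  rw [abs_mul]
  calc _ ≤ (C * r ^ γ) * (K * r ^ (m - 2)) :=
        mul_le_mul h1 h2 (abs_nonneg _) ((abs_nonneg _).trans h1)
    _ = C * K * r ^ (γ + m - 2) := by
        rw [show γ + m - 2 = γ + (m - 2) by ring, Real.rpow_add hr.1]
        ring

theorem incr_integrable (hγ : 0 < γ) (hγm : 1 < γ + m) (hk : SingKer k m K)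
    (hφ : ∀ x y, |φ x - φ y| ≤ C * |x - y| ^ γ) (T : ℝ) :
    IntervalIntegrable (fun r => (φ T - φ (T - r)) * deriv k r) volume 0 1 := by
  have hc := continuous_of_holder hγ hφ
  rw [intervalIntegrable_iff_integrableOn_Ioc_of_le zero_le_one]
  refine Integrable.mono'
    ((integrableOn_rpow (p := γ + m - 2) (by linarith) 1 zero_le_one).const_mul (C * K)) ?_ ?_
  · exact ((continuous_const.sub (hc.comp
      (continuous_const.sub continuous_id))).aestronglyMeasurable).mul
      (stronglyMeasurable_deriv k).aestronglyMeasurable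
  · exact (ae_restrict_iff' measurableSet_Ioc).2
      (Eventually.of_forall fun r hr => incr_bound hk hφ T hr)

/-- Interpolation between the two bounds available for a second difference of a Hölder function. -/
theorem interp_bound {C γ δ a r h : ℝ} (hC : 0 ≤ C) (hr : 0 < r) (hh : 0 < h) (hδ : 0 < δ)
    (hδγ : δ ≤ γ)
    (h1 : a ≤ C * r ^ γ) (h2 : a ≤ C * h ^ γ) : a ≤ C * (r ^ (γ - δ) * h ^ δ) := by
  rcases le_total h r with hle | hle
  · refine h2.trans (mul_le_mul_of_nonneg_left ?_ hC)
    calc h ^ γ = h ^ (γ - δ) * h ^ δ := by rw [← Real.rpow_add hh]; ring_nf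
      _ ≤ _ := by gcongr
  · refine h1.trans (mul_le_mul_of_nonneg_left ?_ hC)
    calc r ^ γ = r ^ (γ - δ) * r ^ δ := by rw [← Real.rpow_add hr]; ring_nf
      _ ≤ _ := by gcongr

/-- If `φ` is `γ`-Hölder and `k` is singular of order `m`, then `convDeriv k φ` is Hölder of every
order `δ < γ + m - 1`. -/
theorem convDeriv_holder (hC : 0 ≤ C) (hK : 0 ≤ K) (hm1 : m < 1) (hγ : 0 < γ) (hγm : 1 < γ + m)
    (hk : SingKer k m K)
    (hφ : ∀ x y, |φ x - φ y| ≤ C * |x - y| ^ γ) {δ : ℝ} (hδ : 0 < δ) (hδ' : δ < γ + m - 1) :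
    ∃ C' > 0, ∀ x y, |x - y| ≤ 1 → |convDeriv k φ x - convDeriv k φ y| ≤ C' * |x - y| ^ δ := by
  have hp : -1 < γ - δ + (m - 2) := by linarith
  set I := ∫ r in (0:ℝ)..1, r ^ (γ - δ + (m - 2)) with hI
  have hI0 : 0 ≤ I := intervalIntegral.integral_nonneg zero_le_one fun r hr =>
    Real.rpow_nonneg hr.1 _
  refine ⟨2 * C * |k 1| + 2 * C * K * I + 1, by positivity, fun x y hxy => ?_⟩
  rcases eq_or_ne x y with rfl | hne
  · simp [Real.zero_rpow hδ.ne']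
  have hh : 0 < |x - y| := abs_pos.2 (sub_ne_zero.2 hne)
  set h := |x - y| with hhdef
  have hhγ : h ^ γ ≤ h ^ δ := Real.rpow_le_rpow_of_exponent_ge hh hxy (by linarith)
  have hfirst : |(φ x - φ (x - 1)) * k 1 - (φ y - φ (y - 1)) * k 1| ≤ 2 * C * |k 1| * h ^ δ := by
    have e1 := hφ x y
    have e2 := hφ (x - 1) (y - 1)
    rw [sub_sub_sub_cancel_right] at e2
    rw [← sub_mul, abs_mul]
    have e3 : |φ x - φ (x - 1) - (φ y - φ (y - 1))| ≤ 2 * C * h ^ δ := by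
      have : |φ x - φ (x - 1) - (φ y - φ (y - 1))|
          ≤ |φ x - φ y| + |φ (x - 1) - φ (y - 1)| := by
        rw [show φ x - φ (x - 1) - (φ y - φ (y - 1)) =
          (φ x - φ y) - (φ (x - 1) - φ (y - 1)) by ring]
        exact abs_sub _ _
      nlinarith [mul_le_mul_of_nonneg_left hhγ hC]
    nlinarith [abs_nonneg (k 1)]
  have hsecond : |(∫ r in (0:ℝ)..1, (φ x - φ (x - r)) * deriv k r)
      - ∫ r in (0:ℝ)..1, (φ y - φ (y - r)) * deriv k r| ≤ 2 * C * K * I * h ^ δ := by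
    rw [← intervalIntegral.integral_sub (incr_integrable hγ hγm hk hφ x)
      (incr_integrable hγ hγm hk hφ y)]
    have hb : ∫ r in (0:ℝ)..1, 2 * C * K * h ^ δ * r ^ (γ - δ + (m - 2))
        = 2 * C * K * I * h ^ δ := by
      rw [intervalIntegral.integral_const_mul]
      ring
    rw [← hb, ← Real.norm_eq_abs]
    refine intervalIntegral.norm_integral_le_of_norm_le zero_le_one
      (Eventually.of_forall fun r hr => ?_)
      ((intervalIntegral.intervalIntegrable_rpow' hp).const_mul _)
    rw [Real.norm_eq_abs, ← sub_mul, abs_mul]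
    have a1 := hφ x y
    have a2 := hφ (x - r) (y - r)
    rw [sub_sub_sub_cancel_right] at a2
    have a3 := hφ x (x - r)
    have a4 := hφ y (y - r)
    rw [sub_sub_cancel, abs_of_pos hr.1] at a3 a4
    have b1 : |φ x - φ (x - r) - (φ y - φ (y - r))| ≤ 2 * C * r ^ γ :=
      (abs_sub _ _).trans (by linarith)
    have b2 : |φ x - φ (x - r) - (φ y - φ (y - r))| ≤ 2 * C * h ^ γ := by
      rw [show φ x - φ (x - r) - (φ y - φ (y - r)) =
          (φ x - φ y) - (φ (x - r) - φ (y - r)) by ring]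
      exact (abs_sub _ _).trans (by linarith)
    have b3 := interp_bound (by linarith) hr.1 hh hδ (by linarith) b1 b2
    have b4 := (hk r hr.1 (by linarith [hr.2])).2.2
    calc _ ≤ (2 * C * (r ^ (γ - δ) * h ^ δ)) * (K * r ^ (m - 2)) :=
          mul_le_mul b3 b4 (abs_nonneg _) ((abs_nonneg _).trans b3)
      _ = _ := by
          rw [Real.rpow_add hr.1]
          ring
  have : convDeriv k φ x - convDeriv k φ y =
      ((φ x - φ (x - 1)) * k 1 - (φ y - φ (y - 1)) * k 1) -
      ((∫ r in (0:ℝ)..1, (φ x - φ (x - r)) * deriv k r)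
      - ∫ r in (0:ℝ)..1, (φ y - φ (y - r)) * deriv k r) := by
    rw [convDeriv, convDeriv]
    ring
  rw [this]
  refine (abs_sub _ _).trans ?_
  have : 0 ≤ h ^ δ := Real.rpow_nonneg hh.le _
  linarith

theorem convDeriv_bounded (hγm : 1 < γ + m) (hk : SingKer k m K)
    (hφ : ∀ x y, |φ x - φ y| ≤ C * |x - y| ^ γ) : ∃ B, ∀ x, |convDeriv k φ x| ≤ B := by
  refine ⟨C * |k 1| + ∫ r in (0:ℝ)..1, C * K * r ^ (γ + m - 2), fun x => ?_⟩
  rw [convDeriv]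
  refine (abs_sub _ _).trans (add_le_add ?_ ?_)
  · rw [abs_mul]
    have := hφ x (x - 1)
    simp only [sub_sub_cancel, abs_one, Real.one_rpow, mul_one] at this
    exact mul_le_mul_of_nonneg_right this (abs_nonneg _)
  · rw [← Real.norm_eq_abs]
    exact intervalIntegral.norm_integral_le_of_norm_le zero_le_one
      (Eventually.of_forall fun r hr => incr_bound hk hφ x hr)
      ((intervalIntegral.intervalIntegrable_rpow' (by linarith)).const_mul _)

/-- Convolution with a kernel of order `m` turns a `γ`-Hölder function into a differentiable one as
soon as `γ + m > 1`. With `ψ` a primitive of `φ`, an integration by parts moves the kernel to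
`∫ (ψ(T) - ψ(T-r)) k'(r) dr`, which can be differentiated under the integral sign. -/
theorem hasDerivAt_unitConv_convDeriv (hm : 0 < m) (hγ : 0 < γ)
    (hγm : 1 < γ + m) (hk : SingKer k m K)
    (hφ : ∀ x y, |φ x - φ y| ≤ C * |x - y| ^ γ) {B : ℝ} (hB : ∀ x, |φ x| ≤ B) (T : ℝ) :
    HasDerivAt (unitConv k φ) (convDeriv k φ T) T := by
  have hc := continuous_of_holder hγ hφ
  have hB0 : 0 ≤ B := (abs_nonneg _).trans (hB 0)
  set ψ : ℝ → ℝ := fun x => ∫ s in (0:ℝ)..x, φ s with hψdef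
  have hψ : ∀ x, HasDerivAt ψ (φ x) x := fun x =>
    intervalIntegral.integral_hasDerivAt_right (hc.intervalIntegrable _ _)
      (hc.stronglyMeasurableAtFilter _ _) hc.continuousAt
  have hψc : Continuous ψ := continuous_iff_continuousAt.2 fun x => (hψ x).continuousAt
  have hψB : ∀ x r, 0 < r → |ψ x - ψ (x - r)| ≤ B * r := by
    intro x r hr
    have : ψ x - ψ (x - r) = ∫ s in (x - r)..x, φ s :=
      intervalIntegral.integral_interval_sub_left (hc.intervalIntegrable _ _)
        (hc.intervalIntegrable _ _)
    rw [this, ← Real.norm_eq_abs]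
    refine (intervalIntegral.norm_integral_le_of_norm_le_const (C := B) fun s _ => hB s).trans ?_
    rw [sub_sub_cancel, abs_of_pos hr]
  have hu : uIoc (0:ℝ) 1 = Ioc 0 1 := uIoc_of_le zero_le_one
  have hVint : ∀ x, IntervalIntegrable (fun r => (ψ x - ψ (x - r)) * deriv k r) volume 0 1 := by
    intro x
    rw [intervalIntegrable_iff_integrableOn_Ioc_of_le zero_le_one]
    refine Integrable.mono'
      ((integrableOn_rpow (p := m - 1) (by linarith) 1 zero_le_one).const_mul (B * K)) ?_ ?_
    · exact ((continuous_const.sub (hψc.comp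
        (continuous_const.sub continuous_id))).aestronglyMeasurable).mul
        (stronglyMeasurable_deriv k).aestronglyMeasurable
    · refine (ae_restrict_iff' measurableSet_Ioc).2 (Eventually.of_forall fun r hr => ?_)
      rw [norm_mul]
      calc _ ≤ (B * r) * (K * r ^ (m - 2)) :=
            mul_le_mul (hψB x r hr.1) (hk r hr.1 (by linarith [hr.2])).2.2 (abs_nonneg _)
              (by have := hr.1; positivity)
        _ = B * K * r ^ (m - 1) := by
            rw [show m - 1 = 1 + (m - 2) by ring, Real.rpow_add hr.1, Real.rpow_one]
            ring
  have hVder : HasDerivAt (fun x => ∫ r in (0:ℝ)..1, (ψ x - ψ (x - r)) * deriv k r)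
      (∫ r in (0:ℝ)..1, (φ T - φ (T - r)) * deriv k r) T := by
    refine (intervalIntegral.hasDerivAt_integral_of_dominated_loc_of_deriv_le
      (F := fun x r => (ψ x - ψ (x - r)) * deriv k r)
      (F' := fun x r => (φ x - φ (x - r)) * deriv k r)
      (bound := fun r => C * K * r ^ (γ + m - 2)) (s := univ) univ_mem ?_ (hVint T) ?_ ?_ ?_ ?_).2
    · rw [hu]
      exact Eventually.of_forall fun x => (hVint x).1.aestronglyMeasurable
    · rw [hu]
      exact (incr_integrable hγ hγm hk hφ T).1.aestronglyMeasurable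
    · refine Eventually.of_forall fun r hr x _ => ?_
      rw [hu] at hr
      exact incr_bound hk hφ x hr
    · exact (intervalIntegral.intervalIntegrable_rpow' (by linarith)).const_mul _
    · refine Eventually.of_forall fun r _ x _ => ?_
      have h1 : HasDerivAt (fun y => ψ (y - r)) (φ (x - r)) x := (hψ (x - r)).comp_sub_const x r
      exact ((hψ x).sub h1).mul_const _
  have hparts : ∀ x, unitConv k φ x = (ψ x - ψ (x - 1)) * k 1 -
      ∫ r in (0:ℝ)..1, (ψ x - ψ (x - r)) * deriv k r := by
    intro x
    have hkφ : IntervalIntegrable (fun r => k r * φ (x - r)) volume 0 1 := by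
      rw [intervalIntegrable_iff_integrableOn_Ioc_of_le zero_le_one]
      exact Integrable.mul_bdd (c := B) (hk.integrableOn hm)
        (hc.comp (continuous_const.sub continuous_id)).aestronglyMeasurable
        (Eventually.of_forall fun r => hB _)
    have hcont : ContinuousOn (fun r => (ψ x - ψ (x - r)) * k r) (Icc 0 1) := by
      intro r hr
      rcases eq_or_lt_of_le hr.1 with h0 | h0
      · subst h0
        -- at `0` the boundary term vanishes because `|ψ x - ψ (x-r)| * |k r| ≤ B K r^m`
        rw [ContinuousWithinAt, tendsto_iff_dist_tendsto_zero]
        have hlim : Tendsto (fun r : ℝ => B * K * r ^ m) (nhdsWithin 0 (Icc 0 1)) (nhds 0) := by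
          have : Continuous fun r : ℝ => B * K * r ^ m :=
            continuous_const.mul (continuous_id.rpow_const fun _ => Or.inr hm.le)
          have h := this.tendsto 0
          simp only [Real.zero_rpow hm.ne', mul_zero] at h
          exact h.mono_left nhdsWithin_le_nhds
        refine squeeze_zero' (Eventually.of_forall fun _ => dist_nonneg) ?_ hlim
        filter_upwards [self_mem_nhdsWithin] with s hs
        simp only [sub_zero, sub_self, zero_mul, Real.dist_eq]
        rcases eq_or_lt_of_le hs.1 with h1 | h1
        · subst h1
          simp [Real.zero_rpow hm.ne']
        · rw [abs_mul]
          calc _ ≤ (B * s) * (K * s ^ (m - 1)) :=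
                mul_le_mul (hψB x s h1) (hk s h1 (by linarith [hs.2])).2.1 (abs_nonneg _)
                  (by positivity)
            _ = B * K * s ^ m := by
                rw [show m = 1 + (m - 1) by ring, Real.rpow_add h1, Real.rpow_one]
                ring_nf
      · exact ((continuous_const.sub (hψc.comp
          (continuous_const.sub continuous_id))).continuousAt.mul
          (hk r h0 (by linarith [hr.2])).1.continuousAt).continuousWithinAt
    have hder : ∀ r ∈ Ioo (0:ℝ) 1, HasDerivAt (fun r => (ψ x - ψ (x - r)) * k r)
        (k r * φ (x - r) + (ψ x - ψ (x - r)) * deriv k r) r := by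
      intro r hr
      have h1 : HasDerivAt (fun r => ψ (x - r)) (-φ (x - r)) r := (hψ (x - r)).comp_const_sub x r
      refine ((h1.const_sub (ψ x)).mul
        (hk r hr.1 (by linarith [hr.2])).1.hasDerivAt).congr_deriv ?_
      ring
    have := intervalIntegral.integral_eq_sub_of_hasDerivAt_of_le zero_le_one hcont hder
      (hkφ.add (hVint x))
    rw [intervalIntegral.integral_add hkφ (hVint x)] at this
    simp only [sub_zero, sub_self, zero_mul] at this
    rw [unitConv]
    linarith
  rw [show unitConv k φ = fun x => (ψ x - ψ (x - 1)) * k 1 -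
      ∫ r in (0:ℝ)..1, (ψ x - ψ (x - r)) * deriv k r from funext hparts, convDeriv]
  have h1 : HasDerivAt (fun y => ψ (y - 1)) (φ (T - 1)) T := (hψ (T - 1)).comp_sub_const T 1
  exact (((hψ T).sub h1).mul_const _).sub hVder

end

/-! ### Fractional integrals of singular kernels -/

/-- The Beta integral `B(1-ν, ν)`; its value does not depend on `x`. -/
theorem integral_beta {ν x : ℝ} (hν0 : 0 < ν) (hν1 : ν < 1) (hx : 0 < x) :
    cv (fun t => t ^ (-ν)) (fun t => t ^ (ν - 1)) x = Real.Gamma (1 - ν) * Real.Gamma ν := by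
  have h1 := Complex.betaIntegral_scaled ((1 - ν : ℝ) : ℂ) ((ν : ℝ) : ℂ) hx
  rw [Complex.betaIntegral_eq_Gamma_mul_div _ _ (by simpa using hν1) (by simpa using hν0)] at h1
  have e1 : ((1 - ν : ℝ) : ℂ) + (ν : ℂ) = 1 := by push_cast; ring
  rw [e1] at h1
  simp only [sub_self, Complex.cpow_zero, one_mul, Complex.Gamma_one, div_one] at h1
  rw [Complex.Gamma_ofReal, Complex.Gamma_ofReal] at h1
  have h2 : ∫ t in (0:ℝ)..x, (t : ℂ) ^ (((1 - ν : ℝ) : ℂ) - 1) * ((x : ℂ) - t) ^ ((ν : ℂ) - 1)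
      = ((∫ t in (0:ℝ)..x, t ^ (-ν) * (x - t) ^ (ν - 1) : ℝ) : ℂ) := by
    rw [← intervalIntegral.integral_ofReal]
    refine intervalIntegral.integral_congr fun t ht => ?_
    rw [uIcc_of_le hx.le] at ht
    push_cast
    rw [Complex.ofReal_cpow ht.1, Complex.ofReal_cpow (sub_nonneg.2 ht.2)]
    push_cast
    ring_nf
  rw [h2] at h1
  rw [cv]
  exact_mod_cast h1

theorem intervalIntegrable_beta {a b : ℝ} (ha : 0 < a) (hb : 0 < b) :
    IntervalIntegrable (fun s : ℝ => s ^ (a - 1) * (1 - s) ^ (b - 1)) volume 0 1 := by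
  have h := (Complex.betaIntegral_convergent (u := (a : ℂ)) (v := (b : ℂ)) (by simpa using ha)
    (by simpa using hb))
  rw [intervalIntegrable_iff_integrableOn_Ioc_of_le zero_le_one] at h ⊢
  refine h.re.congr ((ae_restrict_iff' measurableSet_Ioc).2 (Eventually.of_forall fun s hs => ?_))
  have e : (s : ℂ) ^ ((a : ℂ) - 1) * (1 - (s : ℂ)) ^ ((b : ℂ) - 1)
      = ((s ^ (a - 1) * (1 - s) ^ (b - 1) : ℝ) : ℂ) := by
    push_cast
    rw [Complex.ofReal_cpow hs.1.le, Complex.ofReal_cpow (sub_nonneg.2 hs.2)]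
    push_cast
    ring_nf
  simp only
  rw [e]
  exact Complex.ofReal_re _

/-- The substitution `t = y s`, which removes `y` from the domain of integration. -/
theorem rlKer_eq_scaled (f : ℝ → ℝ) (ν : ℝ) {y : ℝ} (hy : 0 < y) :
    rlKer ν f y = y ^ (1 - ν) * ∫ s in (0:ℝ)..1, f (y * s) * (1 - s) ^ (-ν) := by
  have h := intervalIntegral.smul_integral_comp_mul_left (E := ℝ) (a := 0) (b := 1)
    (fun t => f t * (y - t) ^ (-ν)) y
  rw [mul_zero, mul_one] at h
  rw [rlKer, ← h, smul_eq_mul, sub_eq_add_neg 1 ν, Real.rpow_add hy, Real.rpow_one, mul_assoc,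
    ← intervalIntegral.integral_const_mul (y ^ (-ν))]
  congr 1
  refine intervalIntegral.integral_congr fun s hs => ?_
  rw [uIcc_of_le zero_le_one] at hs
  rw [show y - y * s = y * (1 - s) by ring, Real.mul_rpow hy.le (sub_nonneg.2 hs.2)]
  ring

/-- The fractional integral of order `1 - ν` of a singular kernel of order `m` is a singular
kernel of order `m + 1 - ν`. After rescaling to `[0,1]`, it is differentiated under the integral
sign. -/
theorem SingKer.rlKer {f : ℝ → ℝ} {m K ν : ℝ} (hf : SingKer f m K) (hK : 0 ≤ K) (hm : 0 < m)
    (hν0 : 0 < ν) (hν1 : ν < 1) : ∃ K', SingKer (_root_.rlKer ν f) (m + 1 - ν) K' := by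
  have hu : uIoc (0:ℝ) 1 = Ioc 0 1 := uIoc_of_le zero_le_one
  set J : ℝ → ℝ := fun y => ∫ s in (0:ℝ)..1, f (y * s) * (1 - s) ^ (-ν) with hJ
  set I : ℝ := ∫ s in (0:ℝ)..1, s ^ (m - 1) * (1 - s) ^ (-ν) with hI
  have hbeta : IntervalIntegrable (fun s : ℝ => s ^ (m - 1) * (1 - s) ^ (-ν)) volume 0 1 := by
    have := intervalIntegrable_beta hm (b := 1 - ν) (by linarith)
    simpa using this
  have hI0 : 0 ≤ I := intervalIntegral.integral_nonneg zero_le_one fun s hs =>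
    mul_nonneg (Real.rpow_nonneg hs.1 _) (Real.rpow_nonneg (sub_nonneg.2 hs.2) _)
  have hwm : Measurable fun s : ℝ => (1 - s) ^ (-ν) :=
    (measurable_const.sub measurable_id).pow_const _
  have hys : ∀ {y s : ℝ}, 0 < y → y < 2 → s ∈ Ioc (0:ℝ) 1 → 0 < y * s ∧ y * s < 2 := by
    intro y s h0 h2 hs
    exact ⟨mul_pos h0 hs.1, by nlinarith [hs.2]⟩
  have hmeas : ∀ y, 0 < y → y < 2 → AEStronglyMeasurable (fun s => f (y * s) * (1 - s) ^ (-ν))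
      (volume.restrict (Ioc 0 1)) := by
    intro y h0 h2
    refine AEStronglyMeasurable.mul ?_ hwm.aestronglyMeasurable
    refine ContinuousOn.aestronglyMeasurable (fun s hs => ?_) measurableSet_Ioc
    have h := (hf (y * s) (hys h0 h2 hs).1 (hys h0 h2 hs).2).1.continuousAt
    exact (ContinuousAt.comp (f := fun s => y * s) h
      (continuous_const.mul continuous_id).continuousAt).continuousWithinAt
  have hb0 : ∀ y s, 0 < y → y < 2 → s ∈ Ioc (0:ℝ) 1 →
      |f (y * s) * (1 - s) ^ (-ν)| ≤ K * y ^ (m - 1) * (s ^ (m - 1) * (1 - s) ^ (-ν)) := by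
    intro y s h0 h2 hs
    have hw : 0 ≤ (1 - s) ^ (-ν) := Real.rpow_nonneg (sub_nonneg.2 hs.2) _
    have h := (hf (y * s) (hys h0 h2 hs).1 (hys h0 h2 hs).2).2.1
    rw [Real.mul_rpow h0.le hs.1.le] at h
    rw [abs_mul, abs_of_nonneg hw]
    calc _ ≤ _ := mul_le_mul_of_nonneg_right h hw
      _ = _ := by ring
  have hb1 : ∀ y s, 0 < y → y < 2 → s ∈ Ioc (0:ℝ) 1 →
      |s * deriv f (y * s) * (1 - s) ^ (-ν)|
        ≤ K * y ^ (m - 2) * (s ^ (m - 1) * (1 - s) ^ (-ν)) := by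
    intro y s h0 h2 hs
    have hw : 0 ≤ (1 - s) ^ (-ν) := Real.rpow_nonneg (sub_nonneg.2 hs.2) _
    have h := (hf (y * s) (hys h0 h2 hs).1 (hys h0 h2 hs).2).2.2
    rw [Real.mul_rpow h0.le hs.1.le] at h
    rw [abs_mul, abs_of_nonneg hw, abs_mul, abs_of_pos hs.1]
    calc _ ≤ _ := mul_le_mul_of_nonneg_right (mul_le_mul_of_nonneg_left h hs.1.le) hw
      _ = _ := by
        rw [show m - 1 = 1 + (m - 2) by ring, Real.rpow_add hs.1, Real.rpow_one]
        ring
  have hJder : ∀ y, 0 < y → y < 2 →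
      HasDerivAt J (∫ s in (0:ℝ)..1, s * deriv f (y * s) * (1 - s) ^ (-ν)) y := by
    intro y h0 h2
    have hnhds : Ioo (y / 2) 2 ∈ nhds y := Ioo_mem_nhds (by linarith) h2
    refine (intervalIntegral.hasDerivAt_integral_of_dominated_loc_of_deriv_le
      (F := fun y s => f (y * s) * (1 - s) ^ (-ν))
      (F' := fun y s => s * deriv f (y * s) * (1 - s) ^ (-ν))
      (bound := fun s => (K * (max ((y / 2) ^ (m - 2)) (2 ^ (m - 2)))) *
        (s ^ (m - 1) * (1 - s) ^ (-ν))) hnhds ?_ ?_ ?_ ?_ ?_ ?_).2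
    · rw [hu]
      filter_upwards [hnhds] with x hx
      exact hmeas x (by linarith [hx.1]) hx.2
    · rw [intervalIntegrable_iff_integrableOn_Ioc_of_le zero_le_one] at hbeta ⊢
      exact Integrable.mono' (hbeta.const_mul (K * y ^ (m - 1))) (hmeas y h0 h2)
        ((ae_restrict_iff' measurableSet_Ioc).2 (Eventually.of_forall fun s hs => hb0 y s h0 h2 hs))
    · exact ((measurable_id.mul ((measurable_deriv f).comp
        (measurable_const.mul measurable_id))).mul hwm).aestronglyMeasurable
    · refine Eventually.of_forall fun s hs x hx => ?_
      rw [hu] at hs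
      have hx0 : 0 < x := by linarith [hx.1]
      refine (hb1 x s hx0 hx.2 hs).trans (mul_le_mul_of_nonneg_right
        (mul_le_mul_of_nonneg_left ?_ hK) (mul_nonneg (Real.rpow_nonneg hs.1.le _)
          (Real.rpow_nonneg (sub_nonneg.2 hs.2) _)))
      rcases le_total (m - 2) 0 with h | h
      · exact (Real.rpow_le_rpow_of_nonpos (by linarith) hx.1.le h).trans (le_max_left _ _)
      · exact (Real.rpow_le_rpow hx0.le hx.2.le h).trans (le_max_right _ _)
    · exact hbeta.const_mul _
    · refine Eventually.of_forall fun s hs x hx => ?_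
      rw [hu] at hs
      have hx0 : 0 < x := by linarith [hx.1]
      have h := (hf (x * s) (hys hx0 hx.2 hs).1 (hys hx0 hx.2 hs).2).1.hasDerivAt
      have h' := (HasDerivAt.comp x h ((hasDerivAt_id x).mul_const s)).mul_const ((1 - s) ^ (-ν))
      refine h'.congr_deriv ?_
      ring
  have hJb : ∀ y, 0 < y → y < 2 → |J y| ≤ K * y ^ (m - 1) * I := by
    intro y h0 h2
    rw [hI, ← intervalIntegral.integral_const_mul, ← Real.norm_eq_abs]
    exact intervalIntegral.norm_integral_le_of_norm_le zero_le_one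
      (Eventually.of_forall fun s hs => hb0 y s h0 h2 hs) (hbeta.const_mul _)
  have hJb' : ∀ y, 0 < y → y < 2 → |∫ s in (0:ℝ)..1, s * deriv f (y * s) * (1 - s) ^ (-ν)|
      ≤ K * y ^ (m - 2) * I := by
    intro y h0 h2
    rw [hI, ← intervalIntegral.integral_const_mul, ← Real.norm_eq_abs]
    exact intervalIntegral.norm_integral_le_of_norm_le zero_le_one
      (Eventually.of_forall fun s hs => hb1 y s h0 h2 hs) (hbeta.const_mul _)
  refine ⟨2 * K * I, fun y h0 h2 => ?_⟩
  have hd : HasDerivAt (_root_.rlKer ν f) ((1 - ν) * y ^ (1 - ν - 1) * J y + y ^ (1 - ν) *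
      ∫ s in (0:ℝ)..1, s * deriv f (y * s) * (1 - s) ^ (-ν)) y := by
    refine ((Real.hasDerivAt_rpow_const (Or.inl h0.ne')).mul (hJder y h0 h2)).congr_of_eventuallyEq
      ?_
    filter_upwards [lt_mem_nhds h0] with x hx
    exact rlKer_eq_scaled f ν hx
  have hKI : 0 ≤ K * I := mul_nonneg hK hI0
  refine ⟨hd.differentiableAt, ?_, ?_⟩
  · rw [rlKer_eq_scaled f ν h0, abs_mul, abs_of_pos (Real.rpow_pos_of_pos h0 _)]
    calc _ ≤ y ^ (1 - ν) * (K * y ^ (m - 1) * I) :=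
          mul_le_mul_of_nonneg_left (hJb y h0 h2) (Real.rpow_nonneg h0.le _)
      _ = K * I * y ^ (m + 1 - ν - 1) := by
          rw [show m + 1 - ν - 1 = (1 - ν) + (m - 1) by ring, Real.rpow_add h0]
          ring
      _ ≤ 2 * K * I * y ^ (m + 1 - ν - 1) := by
          have := Real.rpow_nonneg h0.le (m + 1 - ν - 1)
          nlinarith
  · rw [hd.deriv]
    have e1 : y ^ (1 - ν - 1) * y ^ (m - 1) = y ^ (m + 1 - ν - 2) := by
      rw [← Real.rpow_add h0]; ring_nf
    have e2 : y ^ (1 - ν) * y ^ (m - 2) = y ^ (m + 1 - ν - 2) := by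
      rw [← Real.rpow_add h0]; ring_nf
    have hpow := Real.rpow_nonneg h0.le (m + 1 - ν - 2)
    calc _ ≤ (1 - ν) * y ^ (1 - ν - 1) * (K * y ^ (m - 1) * I)
          + y ^ (1 - ν) * (K * y ^ (m - 2) * I) := by
          refine (abs_add_le _ _).trans (add_le_add ?_ ?_)
          · rw [abs_mul, abs_of_nonneg (mul_nonneg (sub_nonneg.2 hν1.le)
              (Real.rpow_nonneg h0.le _))]
            exact mul_le_mul_of_nonneg_left (hJb y h0 h2)
              (mul_nonneg (sub_nonneg.2 hν1.le) (Real.rpow_nonneg h0.le _))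
          · rw [abs_mul, abs_of_pos (Real.rpow_pos_of_pos h0 _)]
            exact mul_le_mul_of_nonneg_left (hJb' y h0 h2) (Real.rpow_nonneg h0.le _)
      _ = (2 - ν) * (K * I * y ^ (m + 1 - ν - 2)) := by
          linear_combination (1 - ν) * K * I * e1 + K * I * e2
      _ ≤ 2 * K * I * y ^ (m + 1 - ν - 2) := by
          nlinarith [mul_nonneg hKI hpow]

/-! ### The Mittag-Leffler kernel -/

/-- The Gamma ratio `Γ(x) / Γ(x+α)` is at most `2^{1-α} x^{-α}`, by log-convexity of `Γ` between
`x + α` and `x + α + 1`. -/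
theorem gamma_ratio_le {α x : ℝ} (hα0 : 0 < α) (hα1 : α < 1) (hx : α ≤ x) :
    Real.Gamma x / Real.Gamma (x + α) ≤ 2 ^ (1 - α) * x ^ (-α) := by
  have hx0 : 0 < x := hα0.trans_le hx
  have hG : 0 < Real.Gamma (x + α) := Real.Gamma_pos_of_pos (by linarith)
  have h := Real.Gamma_mul_add_mul_le_rpow_Gamma_mul_rpow_Gamma (s := x + α) (t := x + α + 1)
    (a := α) (b := 1 - α) (by linarith) (by linarith) hα0 (by linarith) (by ring)
  rw [show α * (x + α) + (1 - α) * (x + α + 1) = x + 1 by ring, Real.Gamma_add_one hx0.ne',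
    Real.Gamma_add_one (by linarith), Real.mul_rpow (by linarith) hG.le] at h
  have e : Real.Gamma (x + α) ^ α * ((x + α) ^ (1 - α) * Real.Gamma (x + α) ^ (1 - α))
      = (x + α) ^ (1 - α) * Real.Gamma (x + α) := by
    rw [mul_left_comm, ← Real.rpow_add hG, add_sub_cancel, Real.rpow_one]
  rw [e] at h
  rw [div_le_iff₀ hG]
  have h2 : (x + α) ^ (1 - α) ≤ 2 ^ (1 - α) * x ^ (1 - α) := by
    rw [← Real.mul_rpow (by norm_num) hx0.le]
    exact Real.rpow_le_rpow (by linarith) (by linarith) (by linarith)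
  have h3 : x ^ (1 - α) = x * x ^ (-α) := by
    rw [sub_eq_add_neg, Real.rpow_add hx0, Real.rpow_one]
  rw [h3] at h2
  refine le_of_mul_le_mul_left ?_ hx0
  calc _ ≤ _ := h
    _ ≤ _ := mul_le_mul_of_nonneg_right h2 hG.le
    _ = _ := by ring

/-- The Mittag-Leffler function is given by a power series of infinite radius of convergence. -/
theorem mlf_analytic {α : ℝ} (hα0 : 0 < α) (hα1 : α < 1) : AnalyticOnNhd ℝ (mlf α α) univ := by
  set c : ℕ → ℝ := fun n => 1 / Real.Gamma (α * n + α) with hc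
  have hpos : ∀ n : ℕ, 0 < Real.Gamma (α * n + α) := fun n =>
    Real.Gamma_pos_of_pos (by positivity)
  have hrad : (FormalMultilinearSeries.ofScalars ℝ c).radius = ⊤ := by
    refine FormalMultilinearSeries.ofScalars_radius_eq_top_of_tendsto ℝ c
      (Eventually.of_forall fun n => (one_div_pos.2 (hpos n)).ne') ?_
    have hlin : Tendsto (fun n : ℕ => α * (n:ℝ) + α) atTop atTop :=
      tendsto_atTop_add_const_right _ _
        (tendsto_natCast_atTop_atTop.const_mul_atTop hα0)
    have hlim : Tendsto (fun n : ℕ => 2 ^ (1 - α) * (α * (n:ℝ) + α) ^ (-α)) atTop (nhds 0) := by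
      simpa using ((tendsto_rpow_neg_atTop hα0).comp hlin).const_mul ((2:ℝ) ^ (1 - α))
    refine squeeze_zero (fun n => by positivity) (fun n => ?_) hlim
    refine le_trans (le_of_eq ?_) (gamma_ratio_le hα0 hα1
      (x := α * (n:ℝ) + α) (by have : (0:ℝ) ≤ n := n.cast_nonneg; nlinarith))
    have h1 := hpos n
    have h2 := hpos (n + 1)
    push_cast at h2
    have e : α * ((n:ℝ) + 1) + α = α * n + α + α := by ring
    rw [e] at h2
    simp only [hc, Nat.succ_eq_add_one, Nat.cast_add, Nat.cast_one, e, Real.norm_eq_abs]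
    rw [abs_of_pos (by positivity), abs_of_pos (by positivity)]
    field_simp
  have heq : mlf α α = (FormalMultilinearSeries.ofScalars ℝ c).sum := by
    funext z
    rw [mlf]
    refine (tsum_congr fun n => ?_).trans (FormalMultilinearSeries.ofScalars_sum_eq c z).symm
    simp only [hc, smul_eq_mul]
    ring
  have h := (FormalMultilinearSeries.ofScalars ℝ c).hasFPowerSeriesOnBall
    (by rw [hrad]; exact ENNReal.zero_lt_top)
  rw [hrad] at h
  rw [heq]
  simpa using h.analyticOnNhd

/-- Only the factor `x^{α-1}` is singular: the Mittag-Leffler function and its derivative are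
bounded on the compact range of `-λ x^α`, `0 < x < 2`. -/
theorem falpha_singKer {α lam : ℝ} (hα0 : 0 < α) (hα1 : α < 1) (hlam : 0 < lam) :
    ∃ K, 0 ≤ K ∧ SingKer (falpha α lam) α K := by
  have han := mlf_analytic hα0 hα1
  have hdiff : ∀ z, DifferentiableAt ℝ (mlf α α) z := fun z =>
    (han z (mem_univ z)).differentiableAt
  have hc0 : Continuous (mlf α α) := continuous_iff_continuousAt.2 fun z => (hdiff z).continuousAt
  have hc1 : Continuous (deriv (mlf α α)) := continuous_iff_continuousAt.2 fun z =>
    (han.deriv z (mem_univ z)).continuousAt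
  obtain ⟨M0, hM0⟩ := isCompact_Icc.exists_bound_of_continuousOn (s := Icc (-lam * 2 ^ α) 0)
    hc0.continuousOn
  obtain ⟨M1, hM1⟩ := isCompact_Icc.exists_bound_of_continuousOn (s := Icc (-lam * 2 ^ α) 0)
    hc1.continuousOn
  set M := max (max M0 M1) 0
  have hMM : 0 ≤ M := le_max_right _ _
  have h2α : (0:ℝ) < 2 ^ α := by positivity
  refine ⟨lam * M * (1 + lam * 2 ^ α), by positivity, fun r h0 h2 => ?_⟩
  have hz : -lam * r ^ α ∈ Icc (-lam * 2 ^ α) 0 := by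
    have h1 : r ^ α ≤ 2 ^ α := Real.rpow_le_rpow h0.le h2.le hα0.le
    have h3 : 0 ≤ r ^ α := Real.rpow_nonneg h0.le _
    constructor <;> nlinarith
  have hb0 : |mlf α α (-lam * r ^ α)| ≤ M :=
    (hM0 _ hz).trans ((le_max_left _ _).trans (le_max_left _ _))
  have hb1 : |deriv (mlf α α) (-lam * r ^ α)| ≤ M :=
    (hM1 _ hz).trans ((le_max_right _ _).trans (le_max_left _ _))
  have hd : HasDerivAt (falpha α lam) (lam * ((α - 1) * r ^ (α - 1 - 1)) * mlf α α (-lam * r ^ α)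
      + lam * r ^ (α - 1) * (deriv (mlf α α) (-lam * r ^ α) * (-lam * (α * r ^ (α - 1))))) r := by
    have hin : HasDerivAt (fun r : ℝ => -lam * r ^ α) (-lam * (α * r ^ (α - 1))) r :=
      (Real.hasDerivAt_rpow_const (Or.inl h0.ne')).const_mul _
    exact ((Real.hasDerivAt_rpow_const (Or.inl h0.ne')).const_mul lam).mul
      (HasDerivAt.comp r (hdiff _).hasDerivAt hin)
  refine ⟨hd.differentiableAt, ?_, ?_⟩
  · rw [falpha, abs_mul, abs_mul, abs_of_pos hlam, abs_of_pos (Real.rpow_pos_of_pos h0 _)]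
    have hp := Real.rpow_pos_of_pos h0 (α - 1)
    calc _ ≤ lam * r ^ (α - 1) * M := mul_le_mul_of_nonneg_left hb0 (by positivity)
      _ = lam * M * 1 * r ^ (α - 1) := by ring
      _ ≤ _ := by
        gcongr
        linarith [mul_pos hlam h2α]
  · rw [hd.deriv]
    have hp := Real.rpow_pos_of_pos h0 (α - 2)
    have hp1 := Real.rpow_pos_of_pos h0 (α - 1)
    have e1 : r ^ (α - 1) * r ^ (α - 1) = r ^ α * r ^ (α - 2) := by
      rw [← Real.rpow_add h0, ← Real.rpow_add h0]; ring_nf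
    have h1 : r ^ α ≤ 2 ^ α := Real.rpow_le_rpow h0.le h2.le hα0.le
    rw [show α - 1 - 1 = α - 2 by ring]
    refine (abs_add_le _ _).trans ?_
    have t1 : |lam * ((α - 1) * r ^ (α - 2)) * mlf α α (-lam * r ^ α)|
        ≤ lam * M * r ^ (α - 2) := by
      rw [abs_mul, abs_mul, abs_mul, abs_of_pos hlam, abs_of_pos hp, abs_of_neg (by linarith)]
      calc _ ≤ lam * (1 * r ^ (α - 2)) * M := by
            gcongr
            linarith
        _ = _ := by ring
    have t2 : |lam * r ^ (α - 1) * (deriv (mlf α α) (-lam * r ^ α) * (-lam * (α * r ^ (α - 1))))|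
        ≤ lam * M * (lam * 2 ^ α) * r ^ (α - 2) := by
      rw [abs_mul, abs_mul, abs_mul, abs_mul, abs_mul, abs_neg, abs_of_pos hlam, abs_of_pos hp1,
        abs_of_pos hα0]
      calc _ ≤ lam * r ^ (α - 1) * (M * (lam * (1 * r ^ (α - 1)))) := by
            gcongr
        _ = lam * M * lam * (r ^ (α - 1) * r ^ (α - 1)) := by ring
        _ = lam * M * lam * (r ^ α * r ^ (α - 2)) := by rw [e1]
        _ ≤ lam * M * lam * (2 ^ α * r ^ (α - 2)) := by gcongr
        _ = _ := by ring
    calc _ ≤ _ := add_le_add t1 t2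
      _ = _ := by ring

theorem rpow_singKer {ν : ℝ} (hν0 : 0 < ν) (hν1 : ν < 1) :
    SingKer (fun r => r ^ (ν - 1)) ν 1 := by
  intro r h0 _
  have hd := Real.hasDerivAt_rpow_const (x := r) (p := ν - 1) (Or.inl h0.ne')
  refine ⟨hd.differentiableAt, ?_, ?_⟩
  · rw [abs_of_pos (Real.rpow_pos_of_pos h0 _), one_mul]
  · rw [hd.deriv, abs_mul, show ν - 1 - 1 = ν - 2 by ring,
      abs_of_pos (Real.rpow_pos_of_pos h0 _), abs_of_neg (by linarith)]
    exact mul_le_mul_of_nonneg_right (by linarith) (Real.rpow_nonneg h0.le _)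

/-! ### The product of fractional derivatives -/

theorem eq_of_hasDerivAt_of_eqOn {A B : ℝ → ℝ} {a b T : ℝ} (hA : HasDerivAt A a T)
    (hB : HasDerivAt B b T) (hAB : ∀ x ∈ Icc (0:ℝ) 1, A x = B x) (hT : T ∈ Icc (0:ℝ) 1) :
    a = b :=
  UniqueDiffWithinAt.eq_deriv (f := A) _ (uniqueDiffOn_Icc zero_lt_one T hT) hA.hasDerivWithinAt
    (hB.hasDerivWithinAt.congr hAB (hAB T hT))

theorem cv_congr_right {a b b' : ℝ → ℝ} {T : ℝ} (hT : 0 ≤ T)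
    (h : ∀ x ∈ Icc 0 T, b x = b' x) : cv a b T = cv a b' T := by
  rw [cv, cv]
  refine intervalIntegral.integral_congr fun t ht => ?_
  rw [uIcc_of_le hT] at ht
  simp only [h (T - t) ⟨by linarith [ht.2], by linarith [ht.1]⟩]

theorem unitConv_zero {w P : ℝ → ℝ} (hP : ∀ x ≤ 0, P x = 0) : ∀ x ≤ 0, unitConv w P x = 0 := by
  intro x hx
  rw [unitConv, intervalIntegral.integral_congr (g := fun _ => (0:ℝ))]
  · simp
  · intro r hr
    rw [uIcc_of_le zero_le_one] at hr
    simp only [hP (x - r) (by linarith [hr.1]), mul_zero]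

theorem convDeriv_zero {k P : ℝ → ℝ} (hP : ∀ x ≤ 0, P x = 0) : ∀ x ≤ 0, convDeriv k P x = 0 := by
  intro x hx
  rw [convDeriv, intervalIntegral.integral_congr (g := fun _ => (0:ℝ))]
  · simp [hP x hx, hP (x - 1) (by linarith)]
  · intro r hr
    rw [uIcc_of_le zero_le_one] at hr
    simp only [hP x hx, hP (x - r) (by linarith [hr.1]), sub_self, zero_mul]

/-- Integration by parts for `unitConv` with a kernel of order `m > 1`, which vanishes at `0`. -/
theorem unitConv_deriv_left {G H h : ℝ → ℝ} {m K B : ℝ} (hG : SingKer G m K) (hm : 1 < m)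
    (hG0 : G 0 = 0) (hH : ∀ x, HasDerivAt H (h x) x) (hB : ∀ x, |h x| ≤ B)
    (hH0 : ∀ x ≤ 0, H x = 0) {T : ℝ} (hT : T ≤ 1) :
    unitConv (deriv G) H T = unitConv G h T := by
  have hHc : Continuous H := continuous_iff_continuousAt.2 fun x => (hH x).continuousAt
  have hHT : Continuous fun r => H (T - r) := hHc.comp (continuous_const.sub continuous_id)
  have hhm : Measurable h := by
    rw [show h = deriv H from funext fun x => (hH x).deriv.symm]
    exact measurable_deriv H
  have hGi := hG.integrableOn (by linarith)
  have i1 : IntervalIntegrable (fun r => G r * h (T - r)) volume 0 1 := by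
    rw [intervalIntegrable_iff_integrableOn_Ioc_of_le zero_le_one]
    exact Integrable.mul_bdd (c := B) hGi
      (hhm.comp (measurable_const.sub measurable_id)).aestronglyMeasurable
      (Eventually.of_forall fun r => hB _)
  have hgi : IntegrableOn (deriv G) (Ioc 0 1) := by
    refine Integrable.mono' ((integrableOn_rpow (p := m - 2) (by linarith) 1
      zero_le_one).const_mul K) (stronglyMeasurable_deriv G).aestronglyMeasurable ?_
    exact (ae_restrict_iff' measurableSet_Ioc).2
      (Eventually.of_forall fun r hr => (hG r hr.1 (by linarith [hr.2])).2.2)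
  have i2 : IntervalIntegrable (fun r => deriv G r * H (T - r)) volume 0 1 := by
    rw [← intervalIntegrable_iff_integrableOn_Ioc_of_le zero_le_one] at hgi
    exact hgi.mul_continuousOn hHT.continuousOn
  have hcont : ContinuousOn G (Icc 0 1) := by
    intro r hr
    rcases eq_or_lt_of_le hr.1 with h0 | h0
    · subst h0
      rw [ContinuousWithinAt, tendsto_iff_dist_tendsto_zero]
      have hlim : Tendsto (fun r : ℝ => K * r ^ (m - 1)) (nhdsWithin 0 (Icc 0 1)) (nhds 0) := by
        have : Continuous fun r : ℝ => K * r ^ (m - 1) :=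
          continuous_const.mul (continuous_id.rpow_const fun _ => Or.inr (by linarith))
        have h := this.tendsto 0
        simp only [Real.zero_rpow (sub_pos.2 hm).ne', mul_zero] at h
        exact h.mono_left nhdsWithin_le_nhds
      refine squeeze_zero' (Eventually.of_forall fun _ => dist_nonneg) ?_ hlim
      filter_upwards [self_mem_nhdsWithin] with s hs
      rw [hG0, Real.dist_eq, sub_zero]
      rcases eq_or_lt_of_le hs.1 with h1 | h1
      · subst h1
        simp [hG0, Real.zero_rpow (sub_pos.2 hm).ne']
      · exact (hG s h1 (by linarith [hs.2])).2.1
    · exact (hG r h0 (by linarith [hr.2])).1.continuousAt.continuousWithinAt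
  have hder : ∀ r ∈ Ioo (0:ℝ) 1, HasDerivAt (fun r => G r * H (T - r))
      (deriv G r * H (T - r) - G r * h (T - r)) r := by
    intro r hr
    refine ((hG r hr.1 (by linarith [hr.2])).1.hasDerivAt.mul
      ((hH (T - r)).comp_const_sub T r)).congr_deriv ?_
    ring
  have := intervalIntegral.integral_eq_sub_of_hasDerivAt_of_le zero_le_one
    (hcont.mul hHT.continuousOn) hder (i2.sub i1)
  rw [intervalIntegral.integral_sub i2 i1] at this
  simp only [Pi.mul_apply] at this
  rw [hG0, hH0 (T - 1) (by linarith)] at this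
  rw [unitConv, unitConv]
  linarith

/-- The identity behind the formula for `Y`: on `[0,1]` the derivative of `f * φ` equals
`D^ν f * D^{1-ν} φ`, where the fractional derivatives are written as `g = (f * t^{-ν})'` and
`h = (t^{ν-1} * φ)'` without their Gamma factors. The Beta integral
`t^{-ν} * t^{ν-1} = Γ(1-ν) Γ(ν)` provides the constant. -/
theorem cv_deriv_rlKer {f φ : ℝ → ℝ} {α ν K C γ B : ℝ} (hν0 : 0 < ν) (hνα : ν < α) (hα1 : α < 1)
    (hK : 0 ≤ K) (hγ : 0 < γ) (hγν : 1 < γ + ν) (hf : SingKer f α K)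
    (hφ : ∀ x y, |φ x - φ y| ≤ C * |x - y| ^ γ) (hB : ∀ x, |φ x| ≤ B)
    (hφ0 : ∀ x ≤ 0, φ x = 0) {T : ℝ} (hT : T ∈ Icc (0:ℝ) 1) :
    cv (deriv (rlKer ν f)) (convDeriv (fun r => r ^ (ν - 1)) φ) T =
      Real.Gamma (1 - ν) * Real.Gamma ν * convDeriv f φ T := by
  have hν1 : ν < 1 := hνα.trans hα1
  have hα0 : 0 < α := hν0.trans hνα
  set κ := Real.Gamma (1 - ν) * Real.Gamma ν
  set q : ℝ → ℝ := fun r => r ^ (ν - 1) with hq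
  set p : ℝ → ℝ := fun r => r ^ (-ν) with hp
  set G := rlKer ν f with hGdef
  set H := unitConv q φ with hHdef
  set h := convDeriv q φ with hhdef
  have hc := continuous_of_holder hγ hφ
  have hqs : SingKer q ν 1 := rpow_singKer hν0 hν1
  obtain ⟨K', hG⟩ := hf.rlKer hK hα0 hν0 hν1
  have hH : ∀ x, HasDerivAt H (h x) x := hasDerivAt_unitConv_convDeriv hν0 hγ hγν hqs hφ hB
  have hHc : Continuous H := continuous_iff_continuousAt.2 fun x => (hH x).continuousAt
  obtain ⟨Bh, hBh⟩ := convDeriv_bounded hγν hqs hφ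
  have hH0 : ∀ x ≤ 0, H x = 0 := unitConv_zero hφ0
  have hh0 : ∀ x ≤ 0, h x = 0 := convDeriv_zero hφ0
  set ψ : ℝ → ℝ := fun x => ∫ s in (0:ℝ)..x, φ s with hψdef
  have hψ : ∀ x, HasDerivAt ψ (φ x) x := fun x =>
    intervalIntegral.integral_hasDerivAt_right (hc.intervalIntegrable _ _)
      (hc.stronglyMeasurableAtFilter _ _) hc.continuousAt
  have hψ0 : ∀ x ≤ 0, ψ x = 0 := by
    intro x hx
    rw [hψdef]
    simp only
    rw [intervalIntegral.integral_congr (g := fun _ => (0:ℝ))]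
    · simp
    · intro s hs
      rw [uIcc_of_ge hx] at hs
      exact hφ0 s hs.2
  have hfi := hf.integrableOn hα0
  have hGi := hG.integrableOn (by linarith)
  have hgi : IntegrableOn (deriv G) (Ioc 0 1) := by
    refine Integrable.mono' ((integrableOn_rpow (p := α + 1 - ν - 2) (by linarith) 1
      zero_le_one).const_mul K') (stronglyMeasurable_deriv G).aestronglyMeasurable ?_
    exact (ae_restrict_iff' measurableSet_Ioc).2
      (Eventually.of_forall fun r hr => (hG r hr.1 (by linarith [hr.2])).2.2)
  have hG0 : G 0 = 0 := by simp [hGdef, rlKer]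
  have hpH : ∀ x ∈ Icc (0:ℝ) 1, cv p H x = κ * ψ x := by
    intro x hx
    have h1 : cv p H x = cv p (cv q φ) x := cv_congr_right hx.1 fun y hy =>
      unitConv_eq_cv hφ0 ⟨hy.1, hy.2.trans hx.2⟩
    rw [h1, ← cv_assoc hx.1 (integrableOn_rpow (by linarith) x hx.1)
      (integrableOn_rpow (by linarith) x hx.1) hc, cv_comm, hψdef]
    simp only [cv]
    rw [← intervalIntegral.integral_const_mul, intervalIntegral.integral_of_le hx.1,
      intervalIntegral.integral_of_le hx.1, integral_Ioc_eq_integral_Ioo,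
      integral_Ioc_eq_integral_Ioo]
    refine setIntegral_congr_fun measurableSet_Ioo fun t ht => ?_
    have := integral_beta hν0 hν1 (sub_pos.2 ht.2)
    simp only [cv] at this
    simp only [this]
    ring
  have stepA : ∀ x ∈ Icc (0:ℝ) 1, unitConv G H x = κ * unitConv f ψ x := by
    intro x hx
    have hsub : Ioc 0 x ⊆ Ioc 0 1 := Ioc_subset_Ioc_right hx.2
    rw [unitConv_eq_cv hH0 hx, unitConv_eq_cv hψ0 hx]
    have h1 : cv G H x = cv f (cv p H) x :=
      cv_assoc hx.1 (hfi.mono_set hsub) (integrableOn_rpow (by linarith) x hx.1) hHc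
    rw [h1, cv_congr_right hx.1 (b' := fun y => κ * ψ y) fun y hy => hpH y ⟨hy.1, hy.2.trans hx.2⟩,
      cv, cv, ← intervalIntegral.integral_const_mul]
    congr 1
    ext t
    ring
  have stepB : ∀ x ∈ Icc (0:ℝ) 1, unitConv (deriv G) H x = κ * unitConv f φ x := by
    intro x hx
    rw [unitConv_deriv_left hG (by linarith) hG0 hH hBh hH0 hx.2]
    exact eq_of_hasDerivAt_of_eqOn (hasDerivAt_unitConv hGi hH hBh x)
      ((hasDerivAt_unitConv hfi hψ hB x).const_mul κ) stepA hx
  rw [← unitConv_eq_cv hh0 hT]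
  exact eq_of_hasDerivAt_of_eqOn (hasDerivAt_unitConv hgi hH hBh T)
    ((hasDerivAt_unitConv_convDeriv hα0 hγ (by linarith) hf hφ hB T).const_mul κ) stepB hT

/-! ### Primitives of the kernel -/

/-- A primitive of a kernel of order `m` is `m`-Hölder. -/
theorem primitive_holder {f : ℝ → ℝ} {m K : ℝ} (hf : SingKer f m K) (hK : 0 ≤ K) (hm : 0 < m)
    (hm1 : m < 1) {x y : ℝ} (hx : x ∈ Icc (0:ℝ) 1) (hy : y ∈ Icc (0:ℝ) 1) :
    |(∫ r in (0:ℝ)..x, f r) - ∫ r in (0:ℝ)..y, f r| ≤ K / m * |x - y| ^ m := by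
  wlog hxy : y ≤ x generalizing x y
  · rw [abs_sub_comm, abs_sub_comm x y]
    exact this hy hx (not_le.1 hxy).le
  have hi : IntervalIntegrable f volume 0 1 :=
    (intervalIntegrable_iff_integrableOn_Ioc_of_le zero_le_one).2 (hf.integrableOn hm)
  have hi' : ∀ z ∈ Icc (0:ℝ) 1, IntervalIntegrable f volume 0 z := fun z hz =>
    hi.mono_set (by rw [uIcc_of_le hz.1, uIcc_of_le zero_le_one]; exact Icc_subset_Icc_right hz.2)
  rw [intervalIntegral.integral_interval_sub_left (hi' x hx) (hi' y hy), ← Real.norm_eq_abs,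
    abs_of_nonneg (sub_nonneg.2 hxy)]
  have hsub : x ^ m ≤ y ^ m + (x - y) ^ m := by
    have := Real.rpow_add_le_add_rpow hy.1 (sub_nonneg.2 hxy) hm.le hm1.le
    rwa [add_sub_cancel] at this
  calc _ ≤ ∫ r in y..x, K * r ^ (m - 1) := by
        refine intervalIntegral.norm_integral_le_of_norm_le hxy
          (Eventually.of_forall fun r hr => ?_)
          ((intervalIntegral.intervalIntegrable_rpow' (by linarith)).const_mul _)
        exact (hf r (hy.1.trans_lt hr.1) (by linarith [hr.2, hx.2])).2.1
    _ = K / m * (x ^ m - y ^ m) := by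
        rw [intervalIntegral.integral_const_mul, integral_rpow (Or.inl (by linarith))]
        rw [sub_add_cancel]
        ring
    _ ≤ K / m * (x - y) ^ m := by
        refine mul_le_mul_of_nonneg_left (by linarith) (by positivity)

/-- The drift term: `∫_0^t s f(t-s) ds` is the primitive of the primitive of `f`. -/
theorem drift_eq {f : ℝ → ℝ} (hf : IntegrableOn f (Ioc 0 1)) {t : ℝ} (ht : t ∈ Icc (0:ℝ) 1) :
    ∫ s in (0:ℝ)..t, s * f (t - s) = ∫ x in (0:ℝ)..t, ∫ r in (0:ℝ)..x, f r := by
  have h1 : ∫ s in (0:ℝ)..t, s * f (t - s) = cv f (cv (fun _ => 1) fun _ => 1) t := by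
    rw [cv_comm]
    simp [cv]
  rw [h1, ← cv_assoc ht.1 (hf.mono_set (Ioc_subset_Ioc_right ht.2))
    (by simp [IntegrableOn]) continuous_const]
  simp [cv]

/-! ### Fractional derivatives on the unit interval -/

/-- The fractional derivative of a singular kernel at an interior point is a two-sided derivative. -/
theorem fracDeriv_singKer {f : ℝ → ℝ} {m K ν : ℝ} (hf : SingKer f m K) (hK : 0 ≤ K) (hm : 0 < m)
    (hν0 : 0 < ν) (hν1 : ν < 1) {y : ℝ} (hy : y ∈ Ioo (0:ℝ) 1) :
    fracDeriv ν f y = 1 / Real.Gamma (1 - ν) * deriv (rlKer ν f) y := by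
  obtain ⟨K', hG⟩ := hf.rlKer hK hm hν0 hν1
  rw [fracDeriv, (hG y hy.1 (by linarith [hy.2])).1.derivWithin
    (uniqueDiffOn_Icc zero_lt_one y (Ioo_subset_Icc_self hy))]

/-- The fractional derivative of order `1 - ν` of a Hölder function `Z` vanishing at `0`, in terms
of an extension `φ` of `Z` to the line. -/
theorem fracDeriv_holder {Z φ : ℝ → ℝ} {ν C γ B : ℝ} (hν0 : 0 < ν) (hν1 : ν < 1) (hγ : 0 < γ)
    (hγν : 1 < γ + ν) (hφ : ∀ x y, |φ x - φ y| ≤ C * |x - y| ^ γ) (hB : ∀ x, |φ x| ≤ B)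
    (hφ0 : ∀ x ≤ 0, φ x = 0) (hφZ : ∀ x ∈ Icc (0:ℝ) 1, φ x = Z x) {u : ℝ}
    (hu : u ∈ Icc (0:ℝ) 1) :
    fracDeriv (1 - ν) Z u = 1 / Real.Gamma ν * convDeriv (fun r => r ^ (ν - 1)) φ u := by
  have hd := (hasDerivAt_unitConv_convDeriv hν0 hγ hγν (rpow_singKer hν0 hν1) hφ hB
    u).hasDerivWithinAt (s := Icc 0 1)
  have heq : ∀ y ∈ Icc (0:ℝ) 1, rlKer (1 - ν) Z y = unitConv (fun r => r ^ (ν - 1)) φ y := by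
    intro y hy
    rw [unitConv_eq_cv hφ0 hy, cv_comm, rlKer, cv]
    refine intervalIntegral.integral_congr fun t ht => ?_
    rw [uIcc_of_le hy.1] at ht
    simp only [hφZ t ⟨ht.1, ht.2.trans hy.2⟩, neg_sub]
  rw [fracDeriv, (hd.congr heq (heq u hu)).derivWithin (uniqueDiffOn_Icc zero_lt_one u hu),
    sub_sub_cancel]

/-- The formula `∫_0^t D^ν f(t-u) D^{1-ν} Z(u) du = (f * Z)'(t)`. -/
theorem integral_fracDeriv_mul {f Z φ : ℝ → ℝ} {α ν K C γ B : ℝ} (hν0 : 0 < ν) (hνα : ν < α)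
    (hα1 : α < 1) (hK : 0 ≤ K) (hγ : 0 < γ) (hγν : 1 < γ + ν) (hf : SingKer f α K)
    (hφ : ∀ x y, |φ x - φ y| ≤ C * |x - y| ^ γ) (hB : ∀ x, |φ x| ≤ B)
    (hφ0 : ∀ x ≤ 0, φ x = 0) (hφZ : ∀ x ∈ Icc (0:ℝ) 1, φ x = Z x) {t : ℝ}
    (ht : t ∈ Icc (0:ℝ) 1) :
    ∫ u in (0:ℝ)..t, fracDeriv ν f (t - u) * fracDeriv (1 - ν) Z u = convDeriv f φ t := by
  have hν1 : ν < 1 := hνα.trans hα1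
  have h1 : ∫ u in (0:ℝ)..t, fracDeriv ν f (t - u) * fracDeriv (1 - ν) Z u =
      ∫ u in (0:ℝ)..t, (1 / Real.Gamma (1 - ν) * (1 / Real.Gamma ν)) *
        (convDeriv (fun r => r ^ (ν - 1)) φ u * deriv (rlKer ν f) (t - u)) := by
    rw [intervalIntegral.integral_of_le ht.1, intervalIntegral.integral_of_le ht.1,
      integral_Ioc_eq_integral_Ioo, integral_Ioc_eq_integral_Ioo]
    refine setIntegral_congr_fun measurableSet_Ioo fun u hu => ?_
    rw [fracDeriv_singKer hf hK (hν0.trans hνα) hν0 hν1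
        ⟨by linarith [hu.2], by linarith [hu.1, ht.2]⟩,
      fracDeriv_holder hν0 hν1 hγ hγν hφ hB hφ0 hφZ ⟨hu.1.le, hu.2.le.trans ht.2⟩]
    ring
  have h2 := cv_deriv_rlKer hν0 hνα hα1 hK hγ hγν hf hφ hB hφ0 ht
  rw [cv_comm, cv] at h2
  have g1 : Real.Gamma (1 - ν) ≠ 0 := (Real.Gamma_pos_of_pos (by linarith)).ne'
  have g2 : Real.Gamma ν ≠ 0 := (Real.Gamma_pos_of_pos hν0).ne'
  rw [h1, intervalIntegral.integral_const_mul, h2]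
  field_simp

/-- A Hölder function on `[0,1]` vanishing at `0` extends to the line by clamping the argument. -/
theorem clamp_holder {Z : ℝ → ℝ} {C γ : ℝ} (hC : 0 ≤ C) (hγ : 0 < γ) (hZ0 : Z 0 = 0)
    (hZ : ∀ x ∈ Icc (0:ℝ) 1, ∀ y ∈ Icc (0:ℝ) 1, |Z x - Z y| ≤ C * |x - y| ^ γ) :
    (∀ x y : ℝ, |Z (max 0 (min x 1)) - Z (max 0 (min y 1))| ≤ C * |x - y| ^ γ) ∧
      ∀ x : ℝ, |Z (max 0 (min x 1))| ≤ C := by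
  have hmem : ∀ x : ℝ, max 0 (min x 1) ∈ Icc (0:ℝ) 1 := fun x =>
    ⟨le_max_left _ _, max_le zero_le_one (min_le_right _ _)⟩
  refine ⟨fun x y => (hZ _ (hmem x) _ (hmem y)).trans ?_, fun x => ?_⟩
  · have h : |max 0 (min x 1) - max 0 (min y 1)| ≤ |x - y| := by
      have h1 := abs_max_sub_max_le_max 0 (min x 1) 0 (min y 1)
      have h2 := abs_min_sub_min_le_max x 1 y 1
      rw [sub_self, abs_zero, max_eq_right (abs_nonneg (min x 1 - min y 1))] at h1
      rw [sub_self, abs_zero, max_eq_left (abs_nonneg (x - y))] at h2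
      exact h1.trans h2
    exact mul_le_mul_of_nonneg_left (Real.rpow_le_rpow (abs_nonneg _) h hγ.le) hC
  · have h := hZ _ (hmem x) 0 ⟨le_rfl, zero_le_one⟩
    rw [hZ0, sub_zero, sub_zero] at h
    refine h.trans (mul_le_of_le_one_right hC ?_)
    exact Real.rpow_le_one (abs_nonneg _) (by rw [abs_of_nonneg (hmem x).1]; exact (hmem x).2) hγ.le

/-- On a set of diameter at most `1`, Hölder regularity passes to smaller exponents. -/
theorem rpow_le_rpow_of_abs_le_one {d p q : ℝ} (hd : d ≠ 0) (hd1 : |d| ≤ 1) (hpq : p ≤ q) :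
    |d| ^ q ≤ |d| ^ p :=
  Real.rpow_le_rpow_of_exponent_ge (abs_pos.2 hd) hd1 hpq

/-- The derivative of a double primitive on `[0,1]`; the kernel is cut off at `1` so that its
primitive is continuous on the line. -/
theorem hasDerivWithinAt_double_primitive {f : ℝ → ℝ} (hf : IntegrableOn f (Ioc 0 1)) {t : ℝ}
    (ht : t ∈ Icc (0:ℝ) 1) :
    HasDerivWithinAt (fun t => ∫ x in (0:ℝ)..t, ∫ r in (0:ℝ)..x, f r) (∫ r in (0:ℝ)..t, f r)
      (Icc 0 1) t := by
  set F0 : ℝ → ℝ := fun x => ∫ r in (0:ℝ)..x, (Ioc (0:ℝ) 1).indicator f r with hF0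
  have hi : Integrable ((Ioc (0:ℝ) 1).indicator f) := hf.integrable_indicator measurableSet_Ioc
  have hc : Continuous F0 := intervalIntegral.continuous_primitive
    (fun a b => hi.intervalIntegrable) 0
  have hF : ∀ x ∈ Icc (0:ℝ) 1, F0 x = ∫ r in (0:ℝ)..x, f r := by
    intro x hx
    simp only [hF0]
    rw [intervalIntegral.integral_of_le hx.1, intervalIntegral.integral_of_le hx.1]
    refine setIntegral_congr_fun measurableSet_Ioc fun r hr => ?_
    have hr1 : r ∈ Ioc (0:ℝ) 1 := ⟨hr.1, hr.2.trans hx.2⟩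
    rw [Set.indicator_apply, if_pos hr1]
  have hd : HasDerivAt (fun t => ∫ x in (0:ℝ)..t, F0 x) (F0 t) t :=
    intervalIntegral.integral_hasDerivAt_right (hc.intervalIntegrable _ _)
      (hc.stronglyMeasurableAtFilter _ _) hc.continuousAt
  have heq : ∀ s ∈ Icc (0:ℝ) 1, (∫ x in (0:ℝ)..s, ∫ r in (0:ℝ)..x, f r) =
      ∫ x in (0:ℝ)..s, F0 x := by
    intro s hs
    refine intervalIntegral.integral_congr fun x hx => ?_
    rw [uIcc_of_le hs.1] at hx
    exact (hF x ⟨hx.1, hx.2.trans hs.2⟩).symm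
  rw [← hF t ht]
  exact hd.hasDerivWithinAt.congr heq (heq t ht)

/-- for `α ∈ (1/2,1)` and `ν ∈ (1/2,α)`, if `Z` is continuous on `[0,1]`,
`Z(0)=0`, with Hölder regularity `γ` for every `γ < 1/2`, and
`X_t = ∫_0^t s f^{α,λ}(t-s) ds + c ∫_0^t f^{α,λ}(t-s) Z_s ds`, then `X` is
differentiable on `[0,1]` with derivative
`Y_t = F^{α,λ}(t) + c ∫_0^t D^ν f^{α,λ}(t-u) D^{1-ν} Z_u du`, and for every `ε > 0`,
`Y` has Hölder regularity `α - 1/2 - ε` on `[0,1]`. -/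
theorem X_differentiable_deriv_holder (α lam c ν : ℝ)
    (hα : α ∈ Set.Ioo (1 / 2 : ℝ) 1) (hlam : 0 < lam) (hc : 0 ≤ c)
    (hν : ν ∈ Set.Ioo (1 / 2 : ℝ) α)
    (Z : ℝ → ℝ) (hZcont : ContinuousOn Z (Set.Icc 0 1)) (hZ0 : Z 0 = 0)
    (hZhold : ∀ γ : ℝ, 0 < γ → γ < 1 / 2 → HolderOn Z γ (Set.Icc 0 1))
    (X : ℝ → ℝ)
    (hX : ∀ t ∈ Set.Icc (0:ℝ) 1,
      X t = (∫ s in (0:ℝ)..t, s * falpha α lam (t - s))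
            + c * ∫ s in (0:ℝ)..t, falpha α lam (t - s) * Z s) :
    (∀ t ∈ Set.Icc (0:ℝ) 1,
      HasDerivWithinAt X
        ((∫ x in (0:ℝ)..t, falpha α lam x)
          + c * ∫ u in (0:ℝ)..t, fracDeriv ν (falpha α lam) (t - u) * fracDeriv (1 - ν) Z u)
        (Set.Icc 0 1) t) ∧
    ∀ ε > 0, HolderOn
      (fun t => (∫ x in (0:ℝ)..t, falpha α lam x)
          + c * ∫ u in (0:ℝ)..t, fracDeriv ν (falpha α lam) (t - u) * fracDeriv (1 - ν) Z u)
      (α - 1 / 2 - ε) (Set.Icc 0 1) := by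
  obtain ⟨hα2, hα1⟩ := hα
  obtain ⟨hν2, hνα⟩ := hν
  have hα0 : 0 < α := by linarith
  have hν0 : 0 < ν := by linarith
  obtain ⟨K, hK, hf⟩ := falpha_singKer hα0 hα1 hlam
  have hfi := hf.integrableOn hα0
  set f := falpha α lam
  set φ : ℝ → ℝ := fun x => Z (max 0 (min x 1)) with hφdef
  have hφ0 : ∀ x ≤ 0, φ x = 0 := by
    intro x hx
    simp only [hφdef]
    rw [max_eq_left ((min_le_left _ _).trans hx), hZ0]
  have hφZ : ∀ x ∈ Icc (0:ℝ) 1, φ x = Z x := by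
    intro x hx
    simp only [hφdef]
    rw [min_eq_left hx.2, max_eq_right hx.1]
  have hext : ∀ γ : ℝ, 0 < γ → γ < 1 / 2 → ∃ C, 0 ≤ C ∧
      (∀ x y, |φ x - φ y| ≤ C * |x - y| ^ γ) ∧ ∀ x, |φ x| ≤ C := by
    intro γ h1 h2
    obtain ⟨C, hC, hZ⟩ := hZhold γ h1 h2
    exact ⟨C, hC.le, clamp_holder hC.le h1 hZ0 hZ⟩
  -- any exponent strictly between `1 - ν` and `1 / 2` makes both convolutions differentiable
  set γ₀ := (1 - ν + 1 / 2) / 2 with hγ₀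
  have hγ₀0 : 0 < γ₀ := by rw [hγ₀]; linarith
  have hγν : 1 < γ₀ + ν := by rw [hγ₀]; linarith
  obtain ⟨C₀, -, hφ, hB⟩ := hext γ₀ hγ₀0 (by rw [hγ₀]; linarith)
  have hY : ∀ t ∈ Icc (0:ℝ) 1,
      ∫ u in (0:ℝ)..t, fracDeriv ν f (t - u) * fracDeriv (1 - ν) Z u = convDeriv f φ t :=
    fun t ht => integral_fracDeriv_mul hν0 hνα hα1 hK hγ₀0 hγν hf hφ hB hφ0 hφZ ht
  refine ⟨fun t ht => ?_, fun ε hε => ?_⟩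
  · have hXeq : ∀ s ∈ Icc (0:ℝ) 1, X s =
        (∫ x in (0:ℝ)..s, ∫ r in (0:ℝ)..x, f r) + c * unitConv f φ s := by
      intro s hs
      rw [hX s hs, drift_eq hfi hs, unitConv_eq_cv hφ0 hs, cv_comm, cv]
      congr 2
      refine intervalIntegral.integral_congr fun u hu => ?_
      rw [uIcc_of_le hs.1] at hu
      simp only [hφZ u ⟨hu.1, hu.2.trans hs.2⟩, mul_comm]
    rw [hY t ht]
    have hd := (hasDerivAt_unitConv_convDeriv hα0 hγ₀0 (by linarith) hf hφ hB
      t).hasDerivWithinAt (s := Icc 0 1)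
    exact ((hasDerivWithinAt_double_primitive hfi ht).add (hd.const_mul c)).congr hXeq (hXeq t ht)
  · set ε' := min ε ((α - 1 / 2) / 2)
    have hε' : 0 < ε' := lt_min hε (by linarith)
    have hε1 : ε' ≤ ε := min_le_left _ _
    have hε2 : ε' ≤ (α - 1 / 2) / 2 := min_le_right _ _
    -- half of the loss `ε'` is spent on the regularity of `Z`, half in `convDeriv_holder`
    obtain ⟨C, hC, hφ', -⟩ := hext (1 / 2 - ε' / 2) (by linarith) (by linarith)
    obtain ⟨C', hC', hconv⟩ := convDeriv_holder (δ := α - 1 / 2 - ε') hC hK hα1 (by linarith)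
      (by linarith) hf hφ' (by linarith) (by linarith)
    refine ⟨K / α + c * C' + 1, by positivity, fun x hx y hy => ?_⟩
    simp only
    rw [hY x hx, hY y hy]
    rcases eq_or_ne x y with hxy | hxy
    · subst hxy
      rw [sub_self, abs_zero]
      positivity
    have hd0 : x - y ≠ 0 := sub_ne_zero.2 hxy
    have hd1 : |x - y| ≤ 1 := by
      rw [abs_le]
      constructor <;> linarith [hx.1, hx.2, hy.1, hy.2]
    set P := |x - y| ^ (α - 1 / 2 - ε)
    have hP : 0 ≤ P := by positivity
    have h1 := (primitive_holder hf hK hα0 hα1 hx hy).trans (mul_le_mul_of_nonneg_left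
      (rpow_le_rpow_of_abs_le_one hd0 hd1 (by linarith : α - 1 / 2 - ε ≤ α)) (by positivity))
    have h2 := (hconv x y hd1).trans (mul_le_mul_of_nonneg_left
      (rpow_le_rpow_of_abs_le_one hd0 hd1
        (by linarith : α - 1 / 2 - ε ≤ α - 1 / 2 - ε')) hC'.le)
    calc _ = |((∫ r in (0:ℝ)..x, f r) - ∫ r in (0:ℝ)..y, f r) +
            c * (convDeriv f φ x - convDeriv f φ y)| := by ring_nf
      _ ≤ K / α * P + c * (C' * P) := by
        refine (abs_add_le _ _).trans (add_le_add h1 ?_)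
        rw [abs_mul, abs_of_nonneg hc]
        exact mul_le_mul_of_nonneg_left h2 hc
      _ ≤ (K / α + c * C' + 1) * P := by linarith
end
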